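/- Let N be a positive integer, R > 0, a₁, α₁, a₂, α₂, σ₁, σ₂, M₁, M₂ > 0, and let f₁, f₂ : ℝᴺ → ℝ be continuous convex functions with 0 ≤ fᵢ(x) ≤ Mᵢ‖x‖². Let K₁, K₂ ∈ (−∞, 0) satisfy 4K₁² + (2(a₁+α₁)σ₁²/σ₁⁴)K₁ − M₁/σ₁⁴ − (2a₁σ₂²/σ₁⁴)K₂ = 0, 4K₂² + (2(a₂+α₂)σ₂²/σ₂⁴)K₂ − M₂/σ₂⁴ − (2a₂σ₁²/σ₂⁴)K₁ = 0, −(2(a₁+α₁)R²/σ₁²)K₁ − 2K₁N + (2a₁σ₂²R²/σ₁⁴)K₂ ≥ 0, and −(2(a₂+α₂)R²/σ₂²)K₂ − 2NK₂ + (2a₂σ₁²R²/σ₂⁴)K₁ ≥ 0. Then there exists a pair (u₁, u₂) of functions, twice continuously differentiable on the open ball B_R ⊂ ℝᴺ and continuous on the closed ball, satisfying Δu₁(x) = u₁(x)[f₁(x)/σ₁⁴ + (2(a₁+α₁)/σ₁²)ln u₁(x) − (2a₁σ₂²/σ₁⁴)ln u₂(x)] and Δu₂(x) = u₂(x)[f₂(x)/σ₂⁴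 + (2(a₂+α₂)/σ₂²)ln u₂(x) − (2a₂σ₁²/σ₂⁴)ln u₁(x)] for x ∈ B_R, with u₁ = u₂ = 1 on ∂B_R, and such that exp(K₁(R² − ‖x‖²)) ≤ u₁(x) ≤ 1 and exp(K₂(R² − ‖x‖²)) ≤ u₂(x) ≤ 1 for all x in the closed ball. -/

import Mathlib

open Metric

/-- The Laplacian of `f : ℝᴺ → ℝ`: the sum of the second-order partial derivatives. -/
noncomputable def laplacian {N : ℕ} (f : EuclideanSpace ℝ (Fin N) → ℝ)
    (x : EuclideanSpace ℝ (Fin N)) : ℝ :=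
  ∑ i : Fin N,
    fderiv ℝ (fun y => fderiv ℝ f y (EuclideanSpace.single i 1)) x (EuclideanSpace.single i 1)

/-!
Between the barriers each right-hand side is Lipschitz, with constant `l` say, and decreases in the
other unknown. Subtracting `l u` from both sides of each equation therefore makes the Picard
iteration started at the super-solution `(1, 1)` decreasing, and keeps it above the exponential
sub-solution, by the maximum principle.

The linear problem `Δu = l u + g` on the ball is solved without a Green function. For `l = 0` and
polynomial `g` it is linear algebra: `q ↦ Δ((R² - ‖x‖²) q)` is injective on the polynomials of
bounded degree, hence surjective. Density of the polynomials gives continuous `g`, at the price of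
a Laplacian defined only through uniform limits, and small perturbations of `l`, by Banach's fixed
point theorem, give every `l ≥ 0`.

The iterates satisfy a mean value formula which survives their bounded pointwise limit. It writes
the limit as a smooth average minus a truncated potential of the right-hand side, so the limit is
first `C¹`; then the right-hand side is locally Lipschitz and the limit is `C²`.
-/

open Filter Function MeasureTheory Set Topology
open scoped Laplacian

/-! ### The Laplacian -/

section Laplacian

variable {N : ℕ} {p q : EuclideanSpace ℝ (Fin N) → ℝ} {x : EuclideanSpace ℝ (Fin N)}

lemma contDiff_one_fderiv_apply {E : Type*} [NormedAddCommGroup E] [NormedSpace ℝ E] {p : E → ℝ}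
    (hp : ContDiff ℝ 2 p) (e : E) : ContDiff ℝ 1 fun y ↦ fderiv ℝ p y e :=
  (hp.fderiv_right (m := 1) (by norm_num)).clm_apply contDiff_const

lemma laplacian_eq_innerProductSpace_laplacian (hp : ContDiffAt ℝ 2 p x) :
    laplacian p x = Δ p x := by
  have hd : DifferentiableAt ℝ (fderiv ℝ p) x :=
    (hp.fderiv_right (m := 1) (by norm_num)).differentiableAt (by norm_num)
  simp [laplacian, InnerProductSpace.laplacian_eq_iteratedFDeriv_orthonormalBasis p
    (EuclideanSpace.basisFun (Fin N) ℝ), iteratedFDeriv_two_apply, fderiv_clm_apply hd]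

lemma laplacian_add (hp : ContDiff ℝ 2 p) (hq : ContDiff ℝ 2 q) :
    laplacian (p + q) = laplacian p + laplacian q := by
  ext x
  have hpq : ContDiff ℝ 2 (p + q) := hp.add hq
  rw [Pi.add_apply, laplacian_eq_innerProductSpace_laplacian hpq.contDiffAt,
    laplacian_eq_innerProductSpace_laplacian hp.contDiffAt,
    laplacian_eq_innerProductSpace_laplacian hq.contDiffAt,
    hp.contDiffAt.laplacian_add hq.contDiffAt]

lemma laplacian_const_smul (hp : ContDiff ℝ 2 p) (c : ℝ) :
    laplacian (c • p) = c • laplacian p := by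
  ext x
  have hcp : ContDiff ℝ 2 (c • p) := hp.const_smul c
  rw [Pi.smul_apply, laplacian_eq_innerProductSpace_laplacian hcp.contDiffAt,
    laplacian_eq_innerProductSpace_laplacian hp.contDiffAt,
    InnerProductSpace.laplacian_smul c hp.contDiffAt]

@[simp]
lemma laplacian_const (c : ℝ) : laplacian (fun _ : EuclideanSpace ℝ (Fin N) ↦ c) = 0 := by
  ext x
  simp [laplacian]

lemma continuous_laplacian (hp : ContDiff ℝ 2 p) : Continuous (laplacian p) :=
  continuous_finsetSum _ fun i _ ↦
    ((contDiff_one_fderiv_apply hp (EuclideanSpace.single i 1)).continuous_fderiv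
      (by norm_num)).clm_apply continuous_const

lemma laplacian_congr (h : p =ᶠ[𝓝 x] q) : laplacian p x = laplacian q x := by
  refine Finset.sum_congr rfl fun i _ ↦ ?_
  have hderiv : (fun y ↦ fderiv ℝ p y (EuclideanSpace.single i 1)) =ᶠ[𝓝 x]
      fun y ↦ fderiv ℝ q y (EuclideanSpace.single i 1) :=
    (h.fderiv (𝕜 := ℝ)).fun_comp fun L ↦ L (EuclideanSpace.single i 1)
  rw [hderiv.fderiv_eq]

lemma deriv_deriv_nonpos_of_isLocalMax {g : ℝ → ℝ} {t : ℝ} (h : IsLocalMax g t)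
    (hg : ContinuousAt g t) : deriv (deriv g) t ≤ 0 := by
  by_contra! hpos
  -- a positive second derivative would make `t` a local minimum too, hence `g` locally constant
  have hmin : IsLocalMin g t := isLocalMin_of_deriv_deriv_pos hpos h.deriv_eq_zero hg
  have hconst : g =ᶠ[𝓝 t] fun _ ↦ g t := by
    filter_upwards [h, hmin] with s hle hge using le_antisymm hle hge
  have hzero : deriv (deriv g) t = 0 := by
    simpa using hconst.deriv.deriv_eq
  exact hpos.ne' hzero

lemma laplacian_nonpos_of_isLocalMax (hp : ContDiff ℝ 2 p) (h : IsLocalMax p x) :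
    laplacian p x ≤ 0 := by
  refine Finset.sum_nonpos fun i _ ↦ ?_
  set e : EuclideanSpace ℝ (Fin N) := EuclideanSpace.single i 1
  set line : ℝ → EuclideanSpace ℝ (Fin N) := fun t ↦ x + t • e with hline_def
  have hline (t : ℝ) : HasDerivAt line e t := by
    simpa [hline_def] using ((hasDerivAt_id t).smul_const e).const_add x
  have hline_zero : line 0 = x := by simp [hline_def]
  have hderiv : deriv (p ∘ line) = fun t ↦ fderiv ℝ p (line t) e := funext fun t ↦
    ((hp.differentiable (by norm_num) _).hasFDerivAt.comp_hasDerivAt t (hline t)).deriv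
  have hderiv₂ : deriv (deriv (p ∘ line)) 0 = fderiv ℝ (fun y ↦ fderiv ℝ p y e) x e := by
    rw [hderiv, ← hline_zero]
    exact (((contDiff_one_fderiv_apply hp e).differentiable (by norm_num)
      (line 0)).hasFDerivAt.comp_hasDerivAt 0 (hline 0)).deriv
  rw [← hderiv₂]
  refine deriv_deriv_nonpos_of_isLocalMax ?_
    (hp.continuous.continuousAt.comp (hline 0).continuousAt)
  rw [← hline_zero] at h
  exact h.comp_continuous (hline 0).continuousAt

lemma laplacian_comp_norm_sq {h h' : ℝ → ℝ} {h'' : ℝ} (hh : ∀ t, HasDerivAt h (h' t) t)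
    (x : EuclideanSpace ℝ (Fin N)) (hh' : HasDerivAt h' h'' (‖x‖ ^ 2)) :
    laplacian (fun y ↦ h (‖y‖ ^ 2)) x = 4 * ‖x‖ ^ 2 * h'' + 2 * N * h' (‖x‖ ^ 2) := by
  have hsq (y : EuclideanSpace ℝ (Fin N)) :
      HasFDerivAt (fun y : EuclideanSpace ℝ (Fin N) ↦ ‖y‖ ^ 2) (2 • innerSL ℝ y) y :=
    (hasStrictFDerivAt_norm_sq y).hasFDerivAt
  have hfst (i : Fin N) : (fun y : EuclideanSpace ℝ (Fin N) ↦
      fderiv ℝ (fun y ↦ h (‖y‖ ^ 2)) y (EuclideanSpace.single i 1)) =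
      fun y ↦ 2 * (h' (‖y‖ ^ 2) * y i) := by
    ext y
    have hcomp : HasFDerivAt (fun y : EuclideanSpace ℝ (Fin N) ↦ h (‖y‖ ^ 2))
        (h' (‖y‖ ^ 2) • 2 • innerSL ℝ y) y := (hh _).comp_hasFDerivAt y (hsq y)
    rw [hcomp.fderiv]
    simp only [smul_apply, coe_innerSL_apply, EuclideanSpace.inner_single_right,
      Real.ringHom_apply, one_mul, nsmul_eq_mul, Nat.cast_ofNat, smul_eq_mul]
    ring
  have hsnd (i : Fin N) : fderiv ℝ (fun y : EuclideanSpace ℝ (Fin N) ↦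
      2 * (h' (‖y‖ ^ 2) * y i)) x (EuclideanSpace.single i 1) =
      4 * h'' * x i ^ 2 + 2 * h' (‖x‖ ^ 2) := by
    have hcoord : HasFDerivAt (fun y : EuclideanSpace ℝ (Fin N) ↦ y i)
        (EuclideanSpace.proj i : EuclideanSpace ℝ (Fin N) →L[ℝ] ℝ) x :=
      (EuclideanSpace.proj i : EuclideanSpace ℝ (Fin N) →L[ℝ] ℝ).hasFDerivAt
    have hcomp : HasFDerivAt (fun y : EuclideanSpace ℝ (Fin N) ↦ h' (‖y‖ ^ 2))
        (h'' • 2 • innerSL ℝ x) x := hh'.comp_hasFDerivAt x (hsq x)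
    rw [((hcomp.fun_mul hcoord).const_mul 2).fderiv]
    simp only [smul_add, add_apply, smul_apply, PiLp.proj_apply, PiLp.single_eq_same, smul_eq_mul,
      mul_one, coe_innerSL_apply, EuclideanSpace.inner_single_right, Real.ringHom_apply, one_mul,
      nsmul_eq_mul, Nat.cast_ofNat]
    ring
  simp only [laplacian, hfst, hsnd, Finset.sum_add_distrib, ← Finset.mul_sum, Finset.sum_const,
    Finset.card_univ, Fintype.card_fin, nsmul_eq_mul, ← EuclideanSpace.real_norm_sq_eq]
  ring

lemma laplacian_norm_sq : laplacian (fun y : EuclideanSpace ℝ (Fin N) ↦ ‖y‖ ^ 2) =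
    fun _ ↦ 2 * (N : ℝ) := by
  ext x
  simpa using laplacian_comp_norm_sq (h := id) (h' := fun _ ↦ 1) hasDerivAt_id x
    (hasDerivAt_const _ _)

end Laplacian

/-! ### Functions with an approximate Laplacian, and the maximum principle -/

/-- `g` is the Laplacian of `u` on `s` in the following generalised sense: on `s`, `u` is a uniform
limit of `C²` functions on the whole space whose Laplacians converge uniformly to `g`. -/
def HasApproxLaplacianOn {N : ℕ} (u g : EuclideanSpace ℝ (Fin N) → ℝ)
    (s : Set (EuclideanSpace ℝ (Fin N))) : Prop :=
  ∃ p : ℕ → EuclideanSpace ℝ (Fin N) → ℝ, (∀ n, ContDiff ℝ 2 (p n)) ∧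
    TendstoUniformlyOn p u atTop s ∧ TendstoUniformlyOn (fun n ↦ laplacian (p n)) g atTop s

namespace HasApproxLaplacianOn

variable {N : ℕ} {u g v k : EuclideanSpace ℝ (Fin N) → ℝ} {s : Set (EuclideanSpace ℝ (Fin N))}

lemma of_contDiff (hu : ContDiff ℝ 2 u) (s : Set (EuclideanSpace ℝ (Fin N))) :
    HasApproxLaplacianOn u (laplacian u) s :=
  ⟨fun _ ↦ u, fun _ ↦ hu, fun _ hV ↦ Eventually.of_forall fun _ _ _ ↦ refl_mem_uniformity hV,
    fun _ hV ↦ Eventually.of_forall fun _ _ _ ↦ refl_mem_uniformity hV⟩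

lemma congr (h : HasApproxLaplacianOn u g s) (hu : EqOn u v s) (hg : EqOn g k s) :
    HasApproxLaplacianOn v k s :=
  let ⟨p, hp, hpu, hpg⟩ := h
  ⟨p, hp, hpu.congr_right hu, hpg.congr_right hg⟩

lemma add (hu : HasApproxLaplacianOn u g s) (hv : HasApproxLaplacianOn v k s) :
    HasApproxLaplacianOn (u + v) (g + k) s := by
  obtain ⟨p, hp, hpu, hpg⟩ := hu
  obtain ⟨q, hq, hqv, hqk⟩ := hv
  refine ⟨p + q, fun n ↦ (hp n).add (hq n), hpu.add hqv, ?_⟩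
  exact (hpg.add hqk).congr (Eventually.of_forall fun n x _ ↦
    (congrFun (laplacian_add (hp n) (hq n)) x).symm)

lemma const_smul (hu : HasApproxLaplacianOn u g s) (c : ℝ) :
    HasApproxLaplacianOn (c • u) (c • g) s := by
  obtain ⟨p, hp, hpu, hpg⟩ := hu
  have hc : UniformContinuous fun t : ℝ ↦ c • t := uniformContinuous_const_smul c
  refine ⟨fun n ↦ c • p n, fun n ↦ (hp n).const_smul c, hc.comp_tendstoUniformlyOn hpu, ?_⟩
  exact (hc.comp_tendstoUniformlyOn hpg).congr (Eventually.of_forall fun n x _ ↦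
    (congrFun (laplacian_const_smul (hp n) c) x).symm)

lemma sub (hu : HasApproxLaplacianOn u g s) (hv : HasApproxLaplacianOn v k s) :
    HasApproxLaplacianOn (u - v) (g - k) s := by
  simpa [sub_eq_add_neg] using hu.add (hv.const_smul (-1))

lemma continuousOn (h : HasApproxLaplacianOn u g s) : ContinuousOn u s :=
  let ⟨_, hp, hpu, _⟩ := h
  hpu.continuousOn (Frequently.of_forall fun n ↦ (hp n).continuous.continuousOn)

lemma exists_contDiff_dist_lt (h : HasApproxLaplacianOn u g s) {ε : ℝ} (hε : 0 < ε) :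
    ∃ p : EuclideanSpace ℝ (Fin N) → ℝ, ContDiff ℝ 2 p ∧
      ∀ x ∈ s, |u x - p x| < ε ∧ |g x - laplacian p x| < ε := by
  obtain ⟨p, hp, hpu, hpg⟩ := h
  obtain ⟨n, hun, hgn⟩ := ((Metric.tendstoUniformlyOn_iff.1 hpu ε hε).and
    (Metric.tendstoUniformlyOn_iff.1 hpg ε hε)).exists
  exact ⟨p n, hp n, fun x hx ↦ ⟨hun x hx, hgn x hx⟩⟩

/-- The quadratic `κ‖x‖²` makes the maximum strict enough for the approximants to see it. -/
theorem nonpos_of_isCompact (h : HasApproxLaplacianOn u g s) (hN : 0 < N) (hs : IsCompact s)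
    (hbdry : ∀ x ∈ frontier s, u x ≤ 0) (hg : ∀ x ∈ interior s, 0 < u x → 0 ≤ g x) :
    ∀ x ∈ s, u x ≤ 0 := by
  intro x hx
  by_contra! hux
  obtain ⟨r, hr, hsr⟩ := hs.isBounded.exists_pos_norm_le
  have hN' : (0 : ℝ) < N := by exact_mod_cast hN
  set κ := u x / (4 * r ^ 2)
  have hκ : 0 < κ := by positivity
  obtain ⟨p, hp, hpu⟩ := h.exists_contDiff_dist_lt (show 0 < min (u x / 8) (N * κ) by positivity)
  have hsq : ContDiff ℝ 2 fun z : EuclideanSpace ℝ (Fin N) ↦ ‖z‖ ^ 2 := contDiff_norm_sq ℝ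
  have hκsq : ContDiff ℝ 2 (κ • fun z : EuclideanSpace ℝ (Fin N) ↦ ‖z‖ ^ 2) := hsq.const_smul κ
  set U : EuclideanSpace ℝ (Fin N) → ℝ := p + κ • fun z ↦ ‖z‖ ^ 2 with hU_def
  have hU : ContDiff ℝ 2 U := hp.add hκsq
  obtain ⟨y, hy, hmax⟩ := hs.exists_isMaxOn ⟨x, hx⟩ hU.continuous.continuousOn
  have huy : 0 < u y := by
    have hκy : κ * ‖y‖ ^ 2 ≤ u x / 4 := calc
      κ * ‖y‖ ^ 2 ≤ κ * r ^ 2 := by gcongr; exact hsr y hy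
      _ = u x / 4 := by simp only [κ]; field_simp
    have hκx : 0 ≤ κ * ‖x‖ ^ 2 := by positivity
    have hUxy : p x + κ * ‖x‖ ^ 2 ≤ p y + κ * ‖y‖ ^ 2 := hmax hx
    have hpx := abs_lt.1 ((hpu x hx).1.trans_le (min_le_left _ _))
    have hpy := abs_lt.1 ((hpu y hy).1.trans_le (min_le_left _ _))
    linarith [hpx.2, hpy.1]
  have hyi : y ∈ interior s := by
    by_contra hyi
    exact (hbdry y ⟨subset_closure hy, hyi⟩).not_gt huy
  have hlap : laplacian p y + κ * (2 * N) ≤ 0 := by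
    have hU_nonpos :=
      laplacian_nonpos_of_isLocalMax hU (hmax.isLocalMax (mem_interior_iff_mem_nhds.1 hyi))
    rwa [hU_def, laplacian_add hp hκsq, laplacian_const_smul hsq, laplacian_norm_sq] at hU_nonpos
  have hpg := abs_lt.1 ((hpu y hy).2.trans_le (min_le_right _ _))
  nlinarith [hg y hyi huy, hpg.2, mul_pos hN' hκ]

variable {R l κ : ℝ}

lemma nonpos_of_closedBall (h : HasApproxLaplacianOn u g (closedBall 0 R)) (hN : 0 < N)
    (hbdry : ∀ x ∈ sphere (0 : EuclideanSpace ℝ (Fin N)) R, u x ≤ 0)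
    (hg : ∀ x ∈ ball (0 : EuclideanSpace ℝ (Fin N)) R, 0 < u x → 0 ≤ g x)
    (hR : R ≠ 0) : ∀ x ∈ closedBall 0 R, u x ≤ 0 := by
  have : Nonempty (Fin N) := ⟨⟨0, hN⟩⟩
  rw [← interior_closedBall _ hR] at hg
  rw [← frontier_closedBall _ hR] at hbdry
  exact h.nonpos_of_isCompact hN (isCompact_closedBall _ _) hbdry hg

lemma le_torsion (h : HasApproxLaplacianOn u (l • u + k) (closedBall 0 R)) (hN : 0 < N)
    (hR : R ≠ 0) (hl : 0 ≤ l) (hκ : 0 ≤ κ)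
    (hbdry : ∀ x ∈ sphere (0 : EuclideanSpace ℝ (Fin N)) R, u x = 0)
    (hk : ∀ x ∈ closedBall (0 : EuclideanSpace ℝ (Fin N)) R, -κ ≤ k x) :
    ∀ x ∈ closedBall (0 : EuclideanSpace ℝ (Fin N)) R,
      u x ≤ κ / (2 * N) * (R ^ 2 - ‖x‖ ^ 2) := by
  have hN' : (N : ℝ) ≠ 0 := by exact_mod_cast hN.ne'
  set b : EuclideanSpace ℝ (Fin N) → ℝ := fun x ↦ R ^ 2 - ‖x‖ ^ 2
  have hbarrier : HasApproxLaplacianOn ((κ / (2 * N)) • b) (fun _ ↦ -κ) (closedBall 0 R) := by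
    refine (((of_contDiff (contDiff_const (c := R ^ 2)) _).sub
      (of_contDiff (contDiff_norm_sq ℝ) _)).const_smul (κ / (2 * N))).congr
      (fun x _ ↦ rfl) fun x _ ↦ ?_
    simp only [laplacian_const, laplacian_norm_sq, Pi.smul_apply, Pi.sub_apply, Pi.zero_apply,
      smul_eq_mul]
    rw [zero_sub, mul_neg, div_mul_cancel₀ _ (mul_ne_zero two_ne_zero hN')]
  have hnonpos : ∀ x ∈ closedBall 0 R, (u - (κ / (2 * N)) • b) x ≤ 0 := by
    refine (h.sub hbarrier).nonpos_of_closedBall hN (fun x hx ↦ ?_) (fun x hx hpos ↦ ?_) hR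
    · simp [b, hbdry x hx, mem_sphere_zero_iff_norm.1 hx]
    · have hxR : ‖x‖ < R := mem_ball_zero_iff.1 hx
      have hb : 0 ≤ κ / (2 * N) * b x :=
        mul_nonneg (by positivity) (sub_nonneg.2 (by gcongr))
      have hux : 0 < u x := hb.trans_lt (sub_pos.1 hpos)
      have := hk x (ball_subset_closedBall hx)
      have : 0 ≤ l * u x := by positivity
      simp only [Pi.sub_apply, Pi.add_apply, Pi.smul_apply, smul_eq_mul]
      linarith
  exact fun x hx ↦ sub_nonpos.1 (hnonpos x hx)

lemma abs_le_of_abs_le (h : HasApproxLaplacianOn u (l • u + k) (closedBall 0 R)) (hN : 0 < N)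
    (hR : R ≠ 0) (hl : 0 ≤ l)
    (hbdry : ∀ x ∈ sphere (0 : EuclideanSpace ℝ (Fin N)) R, u x = 0)
    (hk : ∀ x ∈ closedBall (0 : EuclideanSpace ℝ (Fin N)) R, |k x| ≤ κ) :
    ∀ x ∈ closedBall (0 : EuclideanSpace ℝ (Fin N)) R, |u x| ≤ R ^ 2 / (2 * N) * κ := by
  intro x hx
  have hκ : 0 ≤ κ := (abs_nonneg _).trans (hk x hx)
  have hneg : HasApproxLaplacianOn (-u) (l • -u + -k) (closedBall 0 R) := by
    simpa [add_comm] using h.const_smul (-1)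
  have hle := h.le_torsion hN hR hl hκ hbdry (fun y hy ↦ (abs_le.1 (hk y hy)).1) x hx
  have hge := hneg.le_torsion hN hR hl hκ (by simpa using hbdry)
    (fun y hy ↦ neg_le_neg (abs_le.1 (hk y hy)).2) x hx
  have htorsion : κ / (2 * N) * (R ^ 2 - ‖x‖ ^ 2) ≤ R ^ 2 / (2 * N) * κ := by
    have : 0 ≤ κ / (2 * N) * ‖x‖ ^ 2 := by positivity
    linarith [show κ / (2 * N) * R ^ 2 = R ^ 2 / (2 * N) * κ by ring]
  exact abs_le'.2 ⟨hle.trans htorsion, hge.trans htorsion⟩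

end HasApproxLaplacianOn

/-! ### The Dirichlet problem for the Poisson equation with polynomial data -/

section Polynomial

open MvPolynomial

/-- The Laplacian `∑ i, ∂ᵢ²` of polynomials, by formal differentiation. -/
noncomputable def polynomialLaplacian (σ A : Type*) [Fintype σ] [CommSemiring A] :
    MvPolynomial σ A →ₗ[A] MvPolynomial σ A :=
  ∑ i, (pderiv i).toLinearMap ∘ₗ (pderiv i).toLinearMap

lemma polynomialLaplacian_apply {σ A : Type*} [Fintype σ] [CommSemiring A]
    (p : MvPolynomial σ A) : polynomialLaplacian σ A p = ∑ i, pderiv i (pderiv i p) := by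
  simp [polynomialLaplacian]

lemma totalDegree_pderiv_le {σ A : Type*} [CommSemiring A] (p : MvPolynomial σ A) (i : σ) :
    (pderiv i p).totalDegree ≤ p.totalDegree - 1 := by
  refine Finset.sup_le fun s hs ↦ Nat.le_sub_of_add_le ?_
  rw [mem_support_iff, coeff_pderiv] at hs
  have hmem : s + Finsupp.single i 1 ∈ p.support := mem_support_iff.2 (left_ne_zero_of_mul hs)
  simpa [Finsupp.sum_add_index'] using le_totalDegree hmem

lemma totalDegree_polynomialLaplacian_le {σ A : Type*} [Fintype σ] [CommSemiring A]
    (p : MvPolynomial σ A) : (polynomialLaplacian σ A p).totalDegree ≤ p.totalDegree - 2 := by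
  rw [polynomialLaplacian_apply]
  refine totalDegree_finsetSum_le fun i _ ↦ ?_
  have := totalDegree_pderiv_le p i
  have := totalDegree_pderiv_le (pderiv i p) i
  omega

variable {N : ℕ}

/-- The polynomial function on Euclidean space attached to a polynomial in its coordinates. -/
noncomputable def polynomialFun :
    MvPolynomial (Fin N) ℝ →ₐ[ℝ] (EuclideanSpace ℝ (Fin N) → ℝ) :=
  aeval fun i x ↦ x i

lemma polynomialFun_apply (p : MvPolynomial (Fin N) ℝ) (x : EuclideanSpace ℝ (Fin N)) :
    polynomialFun p x = eval x.ofLp p := by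
  induction p using MvPolynomial.induction_on <;> simp_all [polynomialFun]

@[simp]
lemma polynomialFun_X (i : Fin N) : polynomialFun (X i) = fun x ↦ x i := by
  simp [polynomialFun]

lemma contDiff_polynomialFun {n : WithTop ℕ∞} (p : MvPolynomial (Fin N) ℝ) :
    ContDiff ℝ n (polynomialFun p) := by
  induction p using MvPolynomial.induction_on with
  | C a => simpa [polynomialFun, Pi.algebraMap_def] using contDiff_const
  | add p q hp hq => rw [map_add]; exact hp.add hq
  | mul_X p i hp =>
    rw [map_mul, polynomialFun_X]
    exact hp.mul (EuclideanSpace.proj i : EuclideanSpace ℝ (Fin N) →L[ℝ] ℝ).contDiff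

lemma fderiv_polynomialFun_single (p : MvPolynomial (Fin N) ℝ) (i : Fin N)
    (x : EuclideanSpace ℝ (Fin N)) :
    fderiv ℝ (polynomialFun p) x (EuclideanSpace.single i 1) = polynomialFun (pderiv i p) x := by
  have hdiff (p : MvPolynomial (Fin N) ℝ) : DifferentiableAt ℝ (polynomialFun p) x :=
    (contDiff_polynomialFun (n := 1) p).differentiable (by norm_num) x
  induction p using MvPolynomial.induction_on with
  | C a => simp [polynomialFun, Pi.algebraMap_def]
  | add p q hp hq =>
    rw [map_add, fderiv_add (hdiff p) (hdiff q), add_apply, hp, hq, map_add, map_add, Pi.add_apply]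
  | mul_X p j hp =>
    have hcoord : HasFDerivAt (fun y : EuclideanSpace ℝ (Fin N) ↦ y j)
        (EuclideanSpace.proj j : EuclideanSpace ℝ (Fin N) →L[ℝ] ℝ) x :=
      (EuclideanSpace.proj j : EuclideanSpace ℝ (Fin N) →L[ℝ] ℝ).hasFDerivAt
    rw [map_mul, polynomialFun_X, ((hdiff p).hasFDerivAt.mul hcoord).fderiv]
    by_cases hij : i = j
    · subst hij
      simp [hp, mul_comm, add_comm]
    · simp [hp, hij, pderiv_X_of_ne (Ne.symm hij), mul_comm]

lemma laplacian_polynomialFun (p : MvPolynomial (Fin N) ℝ) :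
    laplacian (polynomialFun p) = polynomialFun (polynomialLaplacian (Fin N) ℝ p) := by
  ext x
  simp [laplacian, fderiv_polynomialFun_single, polynomialLaplacian_apply]

lemma eq_zero_of_polynomialFun_eventuallyEq_zero {p : MvPolynomial (Fin N) ℝ}
    {x : EuclideanSpace ℝ (Fin N)} (h : ∀ᶠ y in 𝓝 x, polynomialFun p y = 0) : p = 0 := by
  have hpi : ∀ᶠ y in 𝓝 x.ofLp, eval y p = 0 := by
    have := (PiLp.continuous_toLp 2 fun _ : Fin N ↦ ℝ).continuousAt (x := x.ofLp)
    simpa [polynomialFun_apply] using this.eventually h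
  obtain ⟨ε, hε, hball⟩ := Metric.eventually_nhds_iff_ball.1 hpi
  refine funext_set (fun i ↦ ball (x.ofLp i) ε) (fun i ↦ ?_) fun y hy ↦ ?_
  · rw [Real.ball_eq_Ioo]
    exact Ioo_infinite (by linarith)
  · rw [← ball_pi _ hε] at hy
    rw [hball y hy, map_zero]

/-- The polynomial `R² - ‖x‖²`, which vanishes on the sphere of radius `R`. -/
noncomputable def ballWeight (N : ℕ) (R : ℝ) : MvPolynomial (Fin N) ℝ :=
  C (R ^ 2) - ∑ i, X i ^ 2

lemma polynomialFun_ballWeight (R : ℝ) (x : EuclideanSpace ℝ (Fin N)) :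
    polynomialFun (ballWeight N R) x = R ^ 2 - ‖x‖ ^ 2 := by
  simp [polynomialFun_apply, ballWeight, EuclideanSpace.real_norm_sq_eq]

lemma totalDegree_ballWeight_le (R : ℝ) : (ballWeight N R).totalDegree ≤ 2 := by
  refine (totalDegree_sub _ _).trans (max_le (by rw [totalDegree_C]; norm_num)
    (totalDegree_finsetSum_le fun i _ ↦ ?_))
  exact (totalDegree_X_pow i 2).le

lemma eq_zero_of_polynomialLaplacian_ballWeight_mul_eq_zero (hN : 0 < N) {R : ℝ} (hR : 0 < R)
    {q : MvPolynomial (Fin N) ℝ}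
    (hq : polynomialLaplacian (Fin N) ℝ (ballWeight N R * q) = 0) : q = 0 := by
  set u := polynomialFun (ballWeight N R * q)
  have hu : HasApproxLaplacianOn u ((0 : ℝ) • u + 0) (closedBall 0 R) :=
    (HasApproxLaplacianOn.of_contDiff (contDiff_polynomialFun _) _).congr (fun _ _ ↦ rfl)
      fun x _ ↦ by rw [laplacian_polynomialFun, hq, map_zero, zero_smul, add_zero]
  have hweight (x : EuclideanSpace ℝ (Fin N)) : u x = (R ^ 2 - ‖x‖ ^ 2) * polynomialFun q x := by
    simp [u, polynomialFun_ballWeight]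
  have hzero : ∀ x ∈ closedBall (0 : EuclideanSpace ℝ (Fin N)) R, |u x| ≤ R ^ 2 / (2 * N) * 0 :=
    hu.abs_le_of_abs_le hN hR.ne' le_rfl
      (fun x hx ↦ by simp [hweight, mem_sphere_zero_iff_norm.1 hx]) fun x _ ↦ by simp
  refine eq_zero_of_polynomialFun_eventuallyEq_zero
    (eventually_of_mem (ball_mem_nhds (0 : EuclideanSpace ℝ (Fin N)) hR) fun x hx ↦ ?_)
  have hprod := hzero x (ball_subset_closedBall hx)
  rw [hweight, mul_zero, abs_nonpos_iff, mul_eq_zero, sub_eq_zero] at hprod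
  refine hprod.resolve_left (ne_of_gt ?_)
  have := mem_ball_zero_iff.1 hx
  gcongr

theorem exists_polynomialLaplacian_ballWeight_mul_eq (hN : 0 < N) {R : ℝ} (hR : 0 < R)
    (g : MvPolynomial (Fin N) ℝ) :
    ∃ q, polynomialLaplacian (Fin N) ℝ (ballWeight N R * q) = g := by
  -- The map preserves the finite-dimensional space of polynomials of degree at most `deg g`.
  have hdeg : ∀ q ∈ restrictTotalDegree (Fin N) ℝ g.totalDegree,
      (polynomialLaplacian (Fin N) ℝ ∘ₗ LinearMap.mulLeft ℝ (ballWeight N R)) q ∈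
        restrictTotalDegree (Fin N) ℝ g.totalDegree := by
    intro q hq
    rw [mem_restrictTotalDegree] at hq ⊢
    have := totalDegree_polynomialLaplacian_le (ballWeight N R * q)
    have := totalDegree_mul (ballWeight N R) q
    have := totalDegree_ballWeight_le (N := N) R
    simp only [LinearMap.comp_apply, LinearMap.mulLeft_apply]
    omega
  have hinj : Injective (LinearMap.restrict _ hdeg) := by
    refine (injective_iff_map_eq_zero _).2 fun q hq ↦ Subtype.ext ?_
    exact eq_zero_of_polynomialLaplacian_ballWeight_mul_eq_zero hN hR (congrArg Subtype.val hq)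
  obtain ⟨q, hq⟩ := LinearMap.injective_iff_surjective.1 hinj
    ⟨g, (mem_restrictTotalDegree _ _ _).2 le_rfl⟩
  exact ⟨q, congrArg Subtype.val hq⟩

theorem exists_contDiff_laplacian_eq_polynomialFun (hN : 0 < N) {R : ℝ} (hR : 0 < R)
    (g : MvPolynomial (Fin N) ℝ) :
    ∃ u : EuclideanSpace ℝ (Fin N) → ℝ, ContDiff ℝ 2 u ∧ laplacian u = polynomialFun g ∧
      ∀ x ∈ sphere 0 R, u x = 0 := by
  obtain ⟨q, hq⟩ := exists_polynomialLaplacian_ballWeight_mul_eq hN hR g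
  refine ⟨polynomialFun (ballWeight N R * q), contDiff_polynomialFun _,
    by rw [laplacian_polynomialFun, hq], fun x hx ↦ ?_⟩
  simp [polynomialFun_ballWeight, mem_sphere_zero_iff_norm.1 hx]

end Polynomial

/-! ### The Dirichlet problem for `Δu = l u + g` -/

section Dirichlet

variable {N : ℕ} {R l : ℝ} {g : EuclideanSpace ℝ (Fin N) → ℝ}

lemma exists_polynomialFun_abs_sub_lt {s : Set (EuclideanSpace ℝ (Fin N))} (hs : IsCompact s)
    (hg : ContinuousOn g s) {ε : ℝ} (hε : 0 < ε) :
    ∃ p : MvPolynomial (Fin N) ℝ, ∀ x ∈ s, |polynomialFun p x - g x| < ε := by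
  have : CompactSpace s := isCompact_iff_compactSpace.1 hs
  let coord (i : Fin N) : C(s, ℝ) := ⟨fun x ↦ x.1 i, by fun_prop⟩
  let A : Subalgebra ℝ C(s, ℝ) := (MvPolynomial.aeval coord).range
  have hA : A.SeparatesPoints := by
    intro x y hxy
    obtain ⟨i, hi⟩ : ∃ i, x.1 i ≠ y.1 i := by
      by_contra! h
      exact hxy (Subtype.ext (PiLp.ext h))
    exact ⟨coord i, ⟨coord i, ⟨MvPolynomial.X i, by simp⟩, rfl⟩, hi⟩
  have haeval (p : MvPolynomial (Fin N) ℝ) (x : s) :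
      MvPolynomial.aeval coord p x = polynomialFun p x := by
    induction p using MvPolynomial.induction_on <;> simp_all [polynomialFun, coord]
  obtain ⟨⟨_, p, rfl⟩, hp⟩ := ContinuousMap.exists_mem_subalgebra_near_continuous_of_separatesPoints
    A hA (s.domRestrict g) (continuousOn_iff_continuous_domRestrict.1 hg) ε hε
  exact ⟨p, fun x hx ↦ by simpa [haeval] using hp ⟨x, hx⟩⟩

lemma exists_tendstoUniformlyOn_polynomialFun {s : Set (EuclideanSpace ℝ (Fin N))}
    (hs : IsCompact s) (hg : ContinuousOn g s) :
    ∃ p : ℕ → MvPolynomial (Fin N) ℝ,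
      TendstoUniformlyOn (fun n ↦ polynomialFun (p n)) g atTop s := by
  choose p hp using fun n : ℕ ↦
    exists_polynomialFun_abs_sub_lt hs hg (Nat.one_div_pos_of_nat (α := ℝ) (n := n))
  refine ⟨p, Metric.tendstoUniformlyOn_iff.2 fun ε hε ↦ ?_⟩
  filter_upwards [tendsto_one_div_add_atTop_nhds_zero_nat.eventually_le_const hε] with n hn x hx
  rw [dist_comm]
  exact (hp n x hx).trans_le hn

/-- Solvability on the ball of radius `R`, for all continuous `g`, of `Δu = l u + g` with zero
boundary values, where the Laplacian is understood in the sense of `HasApproxLaplacianOn`. -/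
def DirichletSolvable (N : ℕ) (R l : ℝ) : Prop :=
  ∀ g : EuclideanSpace ℝ (Fin N) → ℝ, ContinuousOn g (closedBall 0 R) →
    ∃ u : EuclideanSpace ℝ (Fin N) → ℝ, HasApproxLaplacianOn u (l • u + g) (closedBall 0 R) ∧
      ∀ x ∈ sphere 0 R, u x = 0

lemma uniformCauchySeqOn_of_laplacian (hN : 0 < N) (hR : 0 < R)
    {p : ℕ → EuclideanSpace ℝ (Fin N) → ℝ} (hp : ∀ n, ContDiff ℝ 2 (p n))
    (hbdry : ∀ n, ∀ x ∈ sphere (0 : EuclideanSpace ℝ (Fin N)) R, p n x = 0)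
    (hlap : UniformCauchySeqOn (fun n ↦ laplacian (p n)) atTop (closedBall 0 R)) :
    UniformCauchySeqOn p atTop (closedBall 0 R) := by
  have hC : 0 < R ^ 2 / (2 * N) := by positivity
  refine Metric.uniformCauchySeqOn_iff.2 fun ε hε ↦ ?_
  obtain ⟨n₀, hn₀⟩ := Metric.uniformCauchySeqOn_iff.1 hlap (ε / 2 / (R ^ 2 / (2 * N)))
    (by positivity)
  refine ⟨n₀, fun m hm n hn x hx ↦ ?_⟩
  have hdiff : HasApproxLaplacianOn (p m - p n)
      ((0 : ℝ) • (p m - p n) + (laplacian (p m) - laplacian (p n))) (closedBall 0 R) := by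
    simpa using (HasApproxLaplacianOn.of_contDiff (hp m) (closedBall 0 R)).sub
      (HasApproxLaplacianOn.of_contDiff (hp n) (closedBall 0 R))
  have hle := hdiff.abs_le_of_abs_le hN hR.ne' le_rfl
    (fun y hy ↦ by simp [hbdry m y hy, hbdry n y hy]) (fun y hy ↦ (hn₀ m hm n hn y hy).le) x hx
  rw [mul_div_cancel₀ _ hC.ne'] at hle
  exact hle.trans_lt (half_lt_self hε)

lemma dirichletSolvable_zero (hN : 0 < N) (hR : 0 < R) : DirichletSolvable N R 0 := by
  intro g hg
  obtain ⟨q, hq⟩ := exists_tendstoUniformlyOn_polynomialFun (isCompact_closedBall 0 R) hg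
  choose p hp hlap hbdry using fun n ↦ exists_contDiff_laplacian_eq_polynomialFun hN hR (q n)
  simp only [← hlap] at hq
  have hcauchy := uniformCauchySeqOn_of_laplacian hN hR hp hbdry hq.uniformCauchySeqOn
  have hlim : ∀ x ∈ closedBall (0 : EuclideanSpace ℝ (Fin N)) R,
      ∃ a, Tendsto (fun n ↦ p n x) atTop (𝓝 a) := fun x hx ↦
    cauchySeq_tendsto_of_complete (hcauchy.cauchySeq hx)
  choose! u hu using hlim
  refine ⟨u, ⟨p, hp, hcauchy.tendstoUniformlyOn_of_tendsto hu, ?_⟩, fun x hx ↦ ?_⟩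
  · simpa using hq
  · refine tendsto_nhds_unique (hu x (sphere_subset_closedBall hx)) ?_
    simp [hbdry _ x hx]

lemma continuousOn_extend_val {X : Type*} [TopologicalSpace X] {s : Set X} (v : C(s, ℝ)) :
    ContinuousOn (extend Subtype.val v 0) s :=
  continuousOn_iff_continuous_domRestrict.2 <|
    v.continuous.congr fun x ↦ (Subtype.val_injective.extend_apply v 0 x).symm

/-- Banach's fixed point theorem for `v ↦ u`, where `Δu = l u + (g + μ v)`. -/
lemma DirichletSolvable.add (h : DirichletSolvable N R l) (hN : 0 < N) (hR : R ≠ 0) (hl : 0 ≤ l)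
    {μ : ℝ} (hμ : 0 ≤ μ) (hμR : R ^ 2 / (2 * N) * μ < 1) : DirichletSolvable N R (l + μ) := by
  intro g hg
  let K := closedBall (0 : EuclideanSpace ℝ (Fin N)) R
  have : CompactSpace K := isCompact_iff_compactSpace.1 (isCompact_closedBall _ _)
  let ext (v : C(K, ℝ)) : EuclideanSpace ℝ (Fin N) → ℝ := extend Subtype.val v 0
  have hext (v : C(K, ℝ)) (x : K) : ext v x = v x := Subtype.val_injective.extend_apply v 0 x
  choose u hu hbdry using fun v : C(K, ℝ) ↦
    h (g + μ • ext v) (hg.add ((continuousOn_extend_val v).const_smul μ))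
  let Φ (v : C(K, ℝ)) : C(K, ℝ) :=
    ⟨K.domRestrict (u v), continuousOn_iff_continuous_domRestrict.1 (hu v).continuousOn⟩
  have hΦ : ContractingWith (Real.toNNReal (R ^ 2 / (2 * N) * μ)) Φ := by
    refine ⟨by simpa using hμR, LipschitzWith.of_dist_le_mul fun v w ↦ ?_⟩
    rw [Real.coe_toNNReal _ (by positivity), ContinuousMap.dist_le (by positivity), mul_assoc]
    have hsub : HasApproxLaplacianOn (u v - u w) (l • (u v - u w) + μ • (ext v - ext w)) K :=
      ((hu v).sub (hu w)).congr (fun _ _ ↦ rfl) fun x _ ↦ by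
        simp only [Pi.sub_apply, Pi.add_apply, Pi.smul_apply, smul_eq_mul]
        ring
    have hle : ∀ x ∈ K, |(μ • (ext v - ext w)) x| ≤ μ * dist v w := fun x hx ↦ by
      have hvw := ContinuousMap.dist_apply_le_dist (f := v) (g := w) ⟨x, hx⟩
      rw [← hext, ← hext, Real.dist_eq] at hvw
      simpa [abs_mul, abs_of_nonneg hμ] using mul_le_mul_of_nonneg_left hvw hμ
    exact fun x ↦ hsub.abs_le_of_abs_le hN hR hl
      (fun y hy ↦ by simp [hbdry v y hy, hbdry w y hy]) hle x x.2
  set v := hΦ.fixedPoint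
  have hv (x : K) : u v x = ext v x :=
    (hext v x).symm ▸ congrArg (fun f : C(K, ℝ) ↦ f x) hΦ.fixedPoint_isFixedPt
  refine ⟨u v, (hu v).congr (fun _ _ ↦ rfl) fun x hx ↦ ?_, hbdry v⟩
  simp only [Pi.add_apply, Pi.smul_apply, smul_eq_mul, ← hv ⟨x, hx⟩]
  ring

theorem dirichletSolvable (hN : 0 < N) (hR : 0 < R) (hl : 0 ≤ l) : DirichletSolvable N R l := by
  obtain ⟨n, hn⟩ := exists_nat_gt (R ^ 2 / (2 * N) * l)
  have hn_pos : (0 : ℝ) < n := lt_of_le_of_lt (by positivity) hn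
  have hsteps (k : ℕ) : DirichletSolvable N R (k * (l / n)) := by
    induction k with
    | zero => simpa using dirichletSolvable_zero hN hR
    | succ k ih =>
      have hstep := ih.add hN hR.ne' (by positivity) (μ := l / n) (by positivity)
        (by rwa [mul_div_assoc', div_lt_one hn_pos])
      rwa [Nat.cast_succ, add_one_mul]
  simpa [mul_div_cancel₀ _ hn_pos.ne'] using hsteps n

end Dirichlet

/-! ### Averages against kernels supported in the unit ball -/

section KernelAverage

open scoped ContDiff Convolution

variable {E : Type*} [NormedAddCommGroup E] [InnerProductSpace ℝ E]

/-- A smooth kernel supported in the closed unit ball. It need not be positive, so that directional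
derivatives of kernels are kernels. -/
structure IsUnitBallKernel (k : E → ℝ) : Prop where
  contDiff : ContDiff ℝ ∞ k
  support_subset : support k ⊆ closedBall 0 1

namespace IsUnitBallKernel

variable {k : E → ℝ}

lemma fderiv_apply (hk : IsUnitBallKernel k) (e : E) :
    IsUnitBallKernel fun z ↦ fderiv ℝ k z e where
  contDiff := (hk.contDiff.fderiv_right (m := ∞) (by simp)).clm_apply contDiff_const
  support_subset z hz := by
    have hz' : z ∈ support (fderiv ℝ k) := fun h ↦ hz (by simp [h])
    exact closure_minimal hk.support_subset isClosed_closedBall (support_fderiv_subset ℝ hz')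

lemma hasCompactSupport [FiniteDimensional ℝ E] (hk : IsUnitBallKernel k) : HasCompactSupport k :=
  (isCompact_closedBall 0 1).of_isClosed_subset (isClosed_tsupport k)
    (closure_minimal hk.support_subset isClosed_closedBall)

lemma abs_mul_le_abs_mul (hk : IsUnitBallKernel k) {z : E} {a b : ℝ}
    (h : ‖z‖ ≤ 1 → |a| ≤ b) : |k z * a| ≤ |k z| * b := by
  rw [abs_mul]
  by_cases hz : z ∈ support k
  · have hz' : ‖z‖ ≤ 1 := by simpa using hk.support_subset hz
    exact mul_le_mul_of_nonneg_left (h hz') (abs_nonneg _)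
  · simp [notMem_support.1 hz]

variable [FiniteDimensional ℝ E] [MeasurableSpace E] [BorelSpace E]

lemma integrable (hk : IsUnitBallKernel k) : Integrable k :=
  hk.contDiff.continuous.integrable_of_hasCompactSupport hk.hasCompactSupport

lemma integrable_mul (hk : IsUnitBallKernel k) {g : E → ℝ} (hg : Continuous g) :
    Integrable fun z ↦ k z * g z :=
  (hk.contDiff.continuous.mul hg).integrable_of_hasCompactSupport hk.hasCompactSupport.mul_right

end IsUnitBallKernel

section ScaledKernel

variable {k : E → ℝ} {s : ℝ}

/-- The kernel `k` rescaled to the ball of radius `s`, with the same integral. -/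
noncomputable def scaledKernel (k : E → ℝ) (s : ℝ) (y : E) : ℝ :=
  (s ^ Module.finrank ℝ E)⁻¹ * k (s⁻¹ • y)

lemma IsUnitBallKernel.support_scaledKernel_subset (hk : IsUnitBallKernel k) (hs : 0 < s) :
    support (scaledKernel k s) ⊆ closedBall 0 s := by
  intro y hy
  have hy' := hk.support_subset (right_ne_zero_of_mul hy)
  rwa [mem_closedBall_zero_iff, norm_smul, norm_inv, Real.norm_of_nonneg hs.le, inv_mul_le_iff₀ hs,
    mul_one, ← mem_closedBall_zero_iff] at hy'

lemma fderiv_scaledKernel_apply (hk : IsUnitBallKernel k) (s : ℝ) (y e : E) :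
    fderiv ℝ (scaledKernel k s) y e = s⁻¹ * scaledKernel (fun z ↦ fderiv ℝ k z e) s y := by
  have hscale : HasFDerivAt (fun y : E ↦ s⁻¹ • y) (s⁻¹ • ContinuousLinearMap.id ℝ E) y :=
    (s⁻¹ • ContinuousLinearMap.id ℝ E).hasFDerivAt
  have hderiv : HasFDerivAt (scaledKernel k s) _ y :=
    ((hk.contDiff.differentiable (by simp) (s⁻¹ • y)).hasFDerivAt.comp y hscale).const_mul
      ((s ^ Module.finrank ℝ E)⁻¹)
  rw [hderiv.fderiv]
  simp only [ContinuousLinearMap.comp_smulₛₗ, map_inv₀, Real.ringHom_apply,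
    ContinuousLinearMap.comp_id, smul_apply, smul_eq_mul, scaledKernel]
  ring

end ScaledKernel

variable [FiniteDimensional ℝ E] [MeasurableSpace E] [BorelSpace E]

/-- The average of `g` over the ball of radius `s` around `x`, weighted by the rescaled kernel
`k`. -/
noncomputable def kernelAverage (k g : E → ℝ) (s : ℝ) (x : E) : ℝ :=
  ∫ z, k z * g (x - s • z)

variable {k g g' : E → ℝ} {B s : ℝ} {x : E}

@[simp]
lemma kernelAverage_zero_radius (k g : E → ℝ) (x : E) :
    kernelAverage k g 0 x = (∫ z, k z) * g x := by
  simp [kernelAverage, integral_mul_const]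

lemma kernelAverage_congr (hk : IsUnitBallKernel k) (hs : 0 ≤ s)
    (h : EqOn g g' (closedBall x s)) : kernelAverage k g s x = kernelAverage k g' s x := by
  refine integral_congr_ae (.of_forall fun z ↦ ?_)
  by_cases hz : z ∈ support k
  · have hz' : ‖z‖ ≤ 1 := by simpa using hk.support_subset hz
    have hmem : x - s • z ∈ closedBall x s := by
      simpa [norm_smul, abs_of_nonneg hs] using mul_le_of_le_one_right hs hz'
    simp only [h hmem]
  · simp [notMem_support.1 hz]

lemma continuous_kernelAverage (hk : IsUnitBallKernel k) (hg : Continuous g) (x : E) :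
    Continuous fun s ↦ kernelAverage k g s x := by
  have hkc := hk.contDiff.continuous
  have hset (s : ℝ) :
      kernelAverage k g s x = ∫ z in closedBall 0 1, k z * g (x - s • z) := by
    refine (setIntegral_eq_integral_of_forall_compl_eq_zero fun z hz ↦ ?_).symm
    rw [notMem_support.1 fun h ↦ hz (hk.support_subset h), zero_mul]
  simp only [hset]
  exact continuous_parametric_integral_of_continuous (by fun_prop) (isCompact_closedBall 0 1)

lemma stronglyMeasurable_kernelAverage (hk : IsUnitBallKernel k) (hg : Measurable g) (x : E) :
    StronglyMeasurable fun s ↦ kernelAverage k g s x := by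
  have h : Measurable fun q : ℝ × E ↦ k q.2 * g (x - q.1 • q.2) :=
    (hk.contDiff.continuous.measurable.comp measurable_snd).mul (hg.comp (by fun_prop))
  exact h.stronglyMeasurable.integral_prod_right

lemma abs_kernelAverage_le (hk : IsUnitBallKernel k) (hB : ∀ y, |g y| ≤ B) (s : ℝ) (x : E) :
    |kernelAverage k g s x| ≤ (∫ z, |k z|) * B := by
  rw [kernelAverage, ← integral_mul_const, ← Real.norm_eq_abs]
  exact norm_integral_le_of_norm_le (hk.integrable.abs.mul_const B)
    (.of_forall fun z ↦ hk.abs_mul_le_abs_mul fun _ ↦ hB _)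

lemma aestronglyMeasurable_kernel_mul (hk : IsUnitBallKernel k) (hg : Measurable g) (s : ℝ)
    (x : E) : AEStronglyMeasurable fun z ↦ k z * g (x - s • z) :=
  (hk.contDiff.continuous.measurable.mul (hg.comp (by fun_prop))).aestronglyMeasurable

lemma tendsto_kernelAverage (hk : IsUnitBallKernel k) {g : ℕ → E → ℝ} (hg : ∀ n, Measurable (g n))
    (hB : ∀ n y, |g n y| ≤ B) (hlim : ∀ y, Tendsto (fun n ↦ g n y) atTop (𝓝 (g' y))) (s : ℝ)
    (x : E) : Tendsto (fun n ↦ kernelAverage k (g n) s x) atTop (𝓝 (kernelAverage k g' s x)) :=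
  tendsto_integral_of_dominated_convergence (fun z ↦ |k z| * B)
    (fun n ↦ aestronglyMeasurable_kernel_mul hk (hg n) s x) (hk.integrable.abs.mul_const B)
    (fun n ↦ .of_forall fun _ ↦ hk.abs_mul_le_abs_mul fun _ ↦ hB n _)
    (.of_forall fun _ ↦ (hlim _).const_mul _)

lemma lipschitzOnWith_kernelAverage (hk : IsUnitBallKernel k) (hg : Measurable g)
    (hB : ∀ y, |g y| ≤ B) {L : NNReal} {x₀ : E} {r : ℝ} (hs : 0 ≤ s)
    (hL : LipschitzOnWith L g (ball x₀ (r + s))) :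
    LipschitzOnWith (Real.toNNReal (∫ z, |k z|) * L) (kernelAverage k g s) (ball x₀ r) := by
  have hmem {y z : E} (hy : y ∈ ball x₀ r) (hz : ‖z‖ ≤ 1) : y - s • z ∈ ball x₀ (r + s) := by
    have hsz : ‖s • z‖ ≤ s := by
      simpa [norm_smul, abs_of_nonneg hs] using mul_le_of_le_one_right hs hz
    rw [mem_ball_iff_norm] at hy ⊢
    calc ‖y - s • z - x₀‖ = ‖(y - x₀) - s • z‖ := by congr 1; abel
      _ ≤ ‖y - x₀‖ + ‖s • z‖ := norm_sub_le _ _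
      _ < r + s := add_lt_add_of_lt_of_le hy hsz
  have hint (y : E) : Integrable fun z ↦ k z * g (y - s • z) :=
    (hk.integrable.abs.mul_const B).mono' (aestronglyMeasurable_kernel_mul hk hg s y)
      (.of_forall fun z ↦ hk.abs_mul_le_abs_mul fun _ ↦ hB _)
  refine LipschitzOnWith.of_dist_le_mul fun y hy y' hy' ↦ ?_
  rw [NNReal.coe_mul, Real.coe_toNNReal _ (integral_nonneg fun z ↦ abs_nonneg _), mul_assoc,
    ← integral_mul_const, Real.dist_eq, kernelAverage, kernelAverage,
    ← integral_sub (hint y) (hint y'), ← Real.norm_eq_abs]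
  refine norm_integral_le_of_norm_le (hk.integrable.abs.mul_const _) (.of_forall fun z ↦ ?_)
  rw [← mul_sub]
  refine hk.abs_mul_le_abs_mul fun hz ↦ ?_
  simpa [Real.dist_eq] using hL.dist_le_mul _ (hmem hy hz) _ (hmem hy' hz)

lemma kernelAverage_eq_convolution (k g : E → ℝ) (hs : 0 < s) :
    kernelAverage k g s = g ⋆[ContinuousLinearMap.mul ℝ ℝ, volume] scaledKernel k s := by
  ext x
  calc kernelAverage k g s x = ∫ z, k (s⁻¹ • s • z) * g (x - s • z) := by
        simp only [smul_smul, inv_mul_cancel₀ hs.ne', one_smul, kernelAverage]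
    _ = ∫ w, scaledKernel k s w * g (x - w) := by
        rw [Measure.integral_comp_smul volume (fun w ↦ k (s⁻¹ • w) * g (x - w)) s,
          abs_of_pos (by positivity), smul_eq_mul, ← integral_const_mul]
        simp only [scaledKernel, mul_assoc]
    _ = ∫ w, g w * scaledKernel k s (x - w) := by
        rw [← integral_sub_left_eq_self _ volume x]
        simp [mul_comm]

lemma contDiffAt_kernelAverage (hk : IsUnitBallKernel k) (hg : LocallyIntegrable g) (hs : 0 < s)
    (x : E) : ContDiffAt ℝ ∞ (uncurry (kernelAverage k g)) (s, x) := by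
  have hne : ∀ q ∈ Ioo 0 (s + 1) ×ˢ (univ : Set E), q.1 ≠ 0 := fun q hq ↦ hq.1.1.ne'
  have hsmooth : ContDiffOn ℝ ∞ (uncurry (scaledKernel k)) (Ioo 0 (s + 1) ×ˢ (univ : Set E)) :=
    ((contDiff_fst.pow _).contDiffOn.inv fun q hq ↦ pow_ne_zero _ (hne q hq)).mul <|
      hk.contDiff.comp_contDiffOn ((contDiff_fst.contDiffOn.inv hne).smul contDiff_snd.contDiffOn)
  have hsupp : ∀ t y, t ∈ Ioo 0 (s + 1) → y ∉ closedBall 0 (s + 1) → scaledKernel k t y = 0 :=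
    fun t y ht hy ↦ notMem_support.1 fun h ↦
      hy (closedBall_subset_closedBall ht.2.le (hk.support_scaledKernel_subset ht.1 h))
  have hconv := contDiffOn_convolution_right_with_param (n := ⊤) (ContinuousLinearMap.mul ℝ ℝ)
    (μ := volume) isOpen_Ioo (isCompact_closedBall 0 (s + 1)) hsupp hg hsmooth
  have havg : ContDiffOn ℝ ∞ (uncurry (kernelAverage k g)) (Ioo 0 (s + 1) ×ˢ univ) :=
    hconv.congr fun q hq ↦ congrFun (kernelAverage_eq_convolution k g hq.1.1) q.2
  exact havg.contDiffAt ((isOpen_Ioo.prod isOpen_univ).mem_nhds ⟨⟨hs, lt_add_one s⟩, mem_univ x⟩)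

lemma contDiff_kernelAverage (hk : IsUnitBallKernel k) (hg : LocallyIntegrable g) (hs : 0 < s) :
    ContDiff ℝ ∞ (kernelAverage k g s) :=
  contDiff_iff_contDiffAt.2 fun x ↦
    (contDiffAt_kernelAverage hk hg hs x).comp x (contDiff_prodMk_right s).contDiffAt

lemma fderiv_kernelAverage_apply (hk : IsUnitBallKernel k) (hg : LocallyIntegrable g) (hs : 0 < s)
    (x e : E) : fderiv ℝ (kernelAverage k g s) x e =
      s⁻¹ * kernelAverage (fun z ↦ fderiv ℝ k z e) g s x := by
  have hsmooth : ContDiff ℝ 1 (scaledKernel k s) :=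
    contDiff_const.mul ((hk.contDiff.of_le (by simp)).comp (contDiff_const_smul _))
  have hsupp : HasCompactSupport (scaledKernel k s) :=
    (isCompact_closedBall 0 s).of_isClosed_subset (isClosed_tsupport _)
      (closure_minimal (hk.support_scaledKernel_subset hs) isClosed_closedBall)
  rw [kernelAverage_eq_convolution k g hs, (hsupp.hasFDerivAt_convolution_right
      (ContinuousLinearMap.mul ℝ ℝ) (μ := volume) hg hsmooth x).fderiv,
    convolution_precompR_apply _ hg (hsupp.fderiv ℝ) (hsmooth.continuous_fderiv (by norm_num)),
    kernelAverage_eq_convolution _ g hs]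
  simp only [convolution, ← integral_const_mul, fderiv_scaledKernel_apply hk,
    ContinuousLinearMap.mul_apply']
  exact integral_congr_ae (.of_forall fun _ ↦ mul_left_comm _ _ _)

end KernelAverage

/-! ### A bump function and its radial potential -/

section Bump

open scoped ContDiff

/-- A smooth function on the line, positive to the left of `1` and zero to the right of it. -/
noncomputable def bumpProfile (t : ℝ) : ℝ := expNegInvGlue (1 - t)

/-- The primitive of `-bumpProfile / 2` that vanishes at `1`. -/
noncomputable def bumpPrimitive (t : ℝ) : ℝ := 1 / 2 * ∫ s in t..1, bumpProfile s

lemma contDiff_bumpProfile : ContDiff ℝ ∞ bumpProfile :=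
  expNegInvGlue.contDiff.comp (contDiff_const.sub contDiff_id)

lemma bumpProfile_nonneg (t : ℝ) : 0 ≤ bumpProfile t :=
  expNegInvGlue.nonneg _

lemma bumpProfile_pos {t : ℝ} (ht : t < 1) : 0 < bumpProfile t :=
  expNegInvGlue.pos_of_pos (sub_pos.2 ht)

lemma bumpProfile_eq_zero {t : ℝ} (ht : 1 ≤ t) : bumpProfile t = 0 :=
  expNegInvGlue.zero_of_nonpos (sub_nonpos.2 ht)

lemma hasDerivAt_bumpPrimitive (t : ℝ) :
    HasDerivAt bumpPrimitive (-(bumpProfile t / 2)) t := by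
  have hc : Continuous bumpProfile := contDiff_bumpProfile.continuous
  refine ((intervalIntegral.integral_hasDerivAt_left (hc.intervalIntegrable t 1)
    (hc.stronglyMeasurableAtFilter _ _) hc.continuousAt).const_mul (1 / 2)).congr_deriv ?_
  ring

lemma contDiff_bumpPrimitive : ContDiff ℝ ∞ bumpPrimitive := by
  refine contDiff_infty_iff_deriv.2 ⟨fun t ↦ (hasDerivAt_bumpPrimitive t).differentiableAt, ?_⟩
  rw [funext fun t ↦ (hasDerivAt_bumpPrimitive t).deriv]
  exact (contDiff_bumpProfile.div_const 2).neg

lemma bumpPrimitive_eq_zero {t : ℝ} (ht : 1 ≤ t) : bumpPrimitive t = 0 := by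
  have h : ∫ s in t..1, bumpProfile s = ∫ _ in t..1, (0 : ℝ) :=
    intervalIntegral.integral_congr fun s hs ↦ bumpProfile_eq_zero (uIcc_of_ge ht ▸ hs).1
  simp [bumpPrimitive, h]

lemma bumpPrimitive_pos {t : ℝ} (ht : t < 1) : 0 < bumpPrimitive t :=
  mul_pos one_half_pos <| intervalIntegral.intervalIntegral_pos_of_pos_on
    (contDiff_bumpProfile.continuous.intervalIntegrable _ _) (fun _ hs ↦ bumpProfile_pos hs.2) ht

lemma bumpPrimitive_nonneg (t : ℝ) : 0 ≤ bumpPrimitive t :=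
  (lt_or_ge t 1).elim (fun h ↦ (bumpPrimitive_pos h).le) fun h ↦ (bumpPrimitive_eq_zero h).ge

variable {E : Type*} [NormedAddCommGroup E] [InnerProductSpace ℝ E]

/-- The smooth radial kernel `φ` used for averaging over balls. -/
noncomputable def bumpKernel (z : E) : ℝ := bumpProfile (‖z‖ ^ 2)

/-- The radial kernel `ψ` with gradient `-φ(z) z`, where `φ` is `bumpKernel`. -/
noncomputable def bumpPotential (z : E) : ℝ := bumpPrimitive (‖z‖ ^ 2)

lemma isUnitBallKernel_comp_norm_sq {h : ℝ → ℝ} (hh : ContDiff ℝ ∞ h)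
    (hzero : ∀ t, 1 ≤ t → h t = 0) : IsUnitBallKernel fun z : E ↦ h (‖z‖ ^ 2) where
  contDiff := hh.comp (contDiff_norm_sq ℝ)
  support_subset z hz := by
    by_contra hz'
    rw [mem_closedBall_zero_iff, not_le] at hz'
    exact hz (hzero _ (one_le_pow₀ hz'.le))

lemma isUnitBallKernel_bumpKernel : IsUnitBallKernel (bumpKernel : E → ℝ) :=
  isUnitBallKernel_comp_norm_sq contDiff_bumpProfile fun _ ↦ bumpProfile_eq_zero

lemma isUnitBallKernel_bumpPotential : IsUnitBallKernel (bumpPotential : E → ℝ) :=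
  isUnitBallKernel_comp_norm_sq contDiff_bumpPrimitive fun _ ↦ bumpPrimitive_eq_zero

lemma fderiv_bumpPotential_apply (z e : E) :
    fderiv ℝ bumpPotential z e = -(bumpKernel z * inner ℝ z e) := by
  have h : HasFDerivAt bumpPotential _ z :=
    (hasDerivAt_bumpPrimitive (‖z‖ ^ 2)).comp_hasFDerivAt z
      (hasStrictFDerivAt_norm_sq z).hasFDerivAt
  rw [h.fderiv]
  simp only [neg_smul, neg_apply, smul_apply, coe_innerSL_apply, nsmul_eq_mul, Nat.cast_ofNat,
    smul_eq_mul, bumpKernel, neg_inj]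
  ring

lemma abs_fderiv_bumpPotential_apply_le (z e : E) :
    |fderiv ℝ bumpPotential z e| ≤ |bumpKernel z| * ‖e‖ := by
  rw [fderiv_bumpPotential_apply, abs_neg]
  exact isUnitBallKernel_bumpKernel.abs_mul_le_abs_mul fun hz ↦
    (abs_real_inner_le_norm z e).trans (mul_le_of_le_one_left (norm_nonneg e) hz)

variable [FiniteDimensional ℝ E] [MeasurableSpace E] [BorelSpace E]

lemma IsUnitBallKernel.integral_pos {k : E → ℝ} (hk : IsUnitBallKernel k) (hk_nonneg : 0 ≤ k)
    (hk_zero : k 0 ≠ 0) : 0 < ∫ z, k z :=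
  hk.contDiff.continuous.integral_pos_of_hasCompactSupport_nonneg_nonzero hk.hasCompactSupport
    hk_nonneg hk_zero

variable (E)

lemma integral_bumpKernel_pos : 0 < ∫ z : E, bumpKernel z :=
  isUnitBallKernel_bumpKernel.integral_pos (fun _ ↦ bumpProfile_nonneg _)
    (by simpa [bumpKernel] using (bumpProfile_pos one_pos).ne')

lemma integral_bumpPotential_pos : 0 < ∫ z : E, bumpPotential z :=
  isUnitBallKernel_bumpPotential.integral_pos (fun _ ↦ bumpPrimitive_nonneg _)
    (by simpa [bumpPotential] using (bumpPrimitive_pos one_pos).ne')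

end Bump

section DominatedIntegral

variable {α E F : Type*} [MeasurableSpace α] {μ : Measure α} [NormedAddCommGroup E]
  [NormedSpace ℝ E] [NormedAddCommGroup F] [NormedSpace ℝ F] {G : α → E → F} {bound : α → ℝ}
  {V : Set E} {x : E}

lemma hasFDerivAt_integral_of_contDiffOn (hV : IsOpen V)
    (hG : ∀ᵐ a ∂μ, ContDiffOn ℝ 1 (G a) V) (hG_int : ∀ x ∈ V, Integrable (fun a ↦ G a x) μ)
    (hG'_meas : ∀ x ∈ V, AEStronglyMeasurable (fun a ↦ fderiv ℝ (G a) x) μ)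
    (hbound : ∀ᵐ a ∂μ, ∀ x ∈ V, ‖fderiv ℝ (G a) x‖ ≤ bound a) (hbound_int : Integrable bound μ)
    (hx : x ∈ V) :
    HasFDerivAt (fun x ↦ ∫ a, G a x ∂μ) (∫ a, fderiv ℝ (G a) x ∂μ) x := by
  refine hasFDerivAt_integral_of_dominated_of_fderiv_le (F' := fun x a ↦ fderiv ℝ (G a) x)
    (hV.mem_nhds hx) ?_ (hG_int x hx) (hG'_meas x hx) hbound hbound_int ?_
  · filter_upwards [hV.mem_nhds hx] with y hy using (hG_int y hy).aestronglyMeasurable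
  · filter_upwards [hG] with a ha y hy
    exact ((ha.contDiffAt (hV.mem_nhds hy)).differentiableAt (by norm_num)).hasFDerivAt

lemma contDiffOn_one_integral_of_dominated (hV : IsOpen V)
    (hG : ∀ᵐ a ∂μ, ContDiffOn ℝ 1 (G a) V) (hG_int : ∀ x ∈ V, Integrable (fun a ↦ G a x) μ)
    (hG'_meas : ∀ x ∈ V, AEStronglyMeasurable (fun a ↦ fderiv ℝ (G a) x) μ)
    (hbound : ∀ᵐ a ∂μ, ∀ x ∈ V, ‖fderiv ℝ (G a) x‖ ≤ bound a)
    (hbound_int : Integrable bound μ) : ContDiffOn ℝ 1 (fun x ↦ ∫ a, G a x ∂μ) V := by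
  have hderiv := fun x ↦ hasFDerivAt_integral_of_contDiffOn (x := x) hV hG hG_int hG'_meas hbound
    hbound_int
  rw [← zero_add (1 : WithTop ℕ∞), contDiffOn_succ_iff_fderiv_of_isOpen hV, contDiffOn_zero]
  refine ⟨fun x hx ↦ (hderiv x hx).differentiableAt.differentiableWithinAt, by simp, ?_⟩
  refine ContinuousOn.congr ?_ fun x hx ↦ (hderiv x hx).fderiv
  refine continuousOn_of_dominated hG'_meas (fun x hx ↦ ?_) hbound_int ?_
  · filter_upwards [hbound] with a ha using ha x hx
  · filter_upwards [hG] with a ha using ha.continuousOn_fderiv_of_isOpen hV le_rfl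

end DominatedIntegral

/-! ### The truncated potential -/

section IntegralIoc

variable {E : Type*} [NormedAddCommGroup E] [NormedSpace ℝ E] {H : ℝ → E → ℝ} {V : Set E}
  {C C' δ : ℝ}

lemma contDiffOn_one_integral_Ioc (hV : IsOpen V)
    (hH : ∀ s, 0 < s → ∀ x, ContDiffAt ℝ 1 (uncurry H) (s, x))
    (hbound : ∀ s ∈ Ioc 0 δ, ∀ x ∈ V, |H s x| ≤ C)
    (hbound' : ∀ s ∈ Ioc 0 δ, ∀ x ∈ V, ‖fderiv ℝ (H s) x‖ ≤ C') :
    ContDiffOn ℝ 1 (fun x ↦ ∫ s in Ioc 0 δ, H s x) V ∧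
      ∀ x ∈ V, ∀ e, fderiv ℝ (fun x ↦ ∫ s in Ioc 0 δ, H s x) x e =
        ∫ s in Ioc 0 δ, fderiv ℝ (H s) x e := by
  have hae {P : ℝ → Prop} (h : ∀ s ∈ Ioc 0 δ, P s) : ∀ᵐ s ∂volume.restrict (Ioc 0 δ), P s :=
    (ae_restrict_iff' measurableSet_Ioc).2 (.of_forall h)
  have hconst (c : ℝ) : Integrable (fun _ ↦ c) (volume.restrict (Ioc 0 δ)) := by simp
  have hsmooth : ∀ s ∈ Ioc 0 δ, ContDiffOn ℝ 1 (H s) V := fun s hs x _ ↦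
    ((hH s hs.1 x).comp x (contDiff_prodMk_right s).contDiffAt).contDiffWithinAt
  have hmeas (x : E) : AEStronglyMeasurable (fun s ↦ H s x) (volume.restrict (Ioc 0 δ)) :=
    ContinuousOn.aestronglyMeasurable (fun s hs ↦ ((hH s hs.1 x).continuousAt.comp
      (f := fun s ↦ (s, x)) (by fun_prop)).continuousWithinAt) measurableSet_Ioc
  have hmeas' (x : E) :
      AEStronglyMeasurable (fun s ↦ fderiv ℝ (H s) x) (volume.restrict (Ioc 0 δ)) :=
    ContinuousOn.aestronglyMeasurable (fun s hs ↦ ((hH s hs.1 x).fderiv (m := 0) contDiffAt_const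
      (by norm_num)).continuousAt.continuousWithinAt) measurableSet_Ioc
  have hint : ∀ x ∈ V, Integrable (fun s ↦ H s x) (volume.restrict (Ioc 0 δ)) := fun x hx ↦
    (hconst C).mono' (hmeas x) (hae fun s hs ↦ hbound s hs x hx)
  refine ⟨contDiffOn_one_integral_of_dominated hV (hae hsmooth) hint (fun x _ ↦ hmeas' x)
    (hae hbound') (hconst C'), fun x hx e ↦ ?_⟩
  rw [(hasFDerivAt_integral_of_contDiffOn hV (hae hsmooth) hint (fun x _ ↦ hmeas' x)
    (hae hbound') (hconst C') hx).fderiv]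
  exact ContinuousLinearMap.integral_apply
    ((hconst C').mono' (hmeas' x) (hae fun s hs ↦ hbound' s hs x hx)) e

end IntegralIoc

section TruncatedPotential

open scoped ContDiff

variable {E : Type*} [NormedAddCommGroup E] [InnerProductSpace ℝ E] [FiniteDimensional ℝ E]
  [MeasurableSpace E] [BorelSpace E]

/-- The error term of the mean value formula at scale `δ`: the Newtonian potential of `g`,
truncated to the ball of radius `δ`, up to a normalising factor. -/
noncomputable def truncatedPotential (g : E → ℝ) (δ : ℝ) (x : E) : ℝ :=
  ∫ s in (0 : ℝ)..δ, s * kernelAverage bumpPotential g s x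

variable {g g' : E → ℝ} {B s δ : ℝ} {x : E}

lemma truncatedPotential_congr (hδ : 0 ≤ δ) (h : EqOn g g' (closedBall x δ)) :
    truncatedPotential g δ x = truncatedPotential g' δ x := by
  refine intervalIntegral.integral_congr fun s hs ↦ ?_
  rw [uIcc_of_le hδ] at hs
  simp only [kernelAverage_congr isUnitBallKernel_bumpPotential hs.1
    (h.mono (closedBall_subset_closedBall hs.2))]

lemma tendsto_truncatedPotential {g : ℕ → E → ℝ} (hg : ∀ n, Measurable (g n))
    (hB : ∀ n y, |g n y| ≤ B) (hlim : ∀ y, Tendsto (fun n ↦ g n y) atTop (𝓝 (g' y))) (δ : ℝ)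
    (x : E) : Tendsto (fun n ↦ truncatedPotential (g n) δ x) atTop
      (𝓝 (truncatedPotential g' δ x)) := by
  refine intervalIntegral.tendsto_integral_filter_of_dominated_convergence
    (fun s ↦ |s| * ((∫ z : E, |bumpPotential z|) * B)) (.of_forall fun n ↦ ?_)
    (.of_forall fun n ↦ .of_forall fun s _ ↦ ?_) ?_ (.of_forall fun s _ ↦ ?_)
  · exact (stronglyMeasurable_id.mul (stronglyMeasurable_kernelAverage
      isUnitBallKernel_bumpPotential (hg n) x)).aestronglyMeasurable
  · rw [norm_mul]
    exact mul_le_mul_of_nonneg_left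
      (abs_kernelAverage_le isUnitBallKernel_bumpPotential (hB n) s x) (norm_nonneg s)
  · exact (continuous_abs.mul continuous_const).intervalIntegrable 0 δ
  · exact (tendsto_kernelAverage isUnitBallKernel_bumpPotential hg hB hlim s x).const_mul s

lemma hasDerivAt_truncatedPotential (hg : Continuous g) (x : E) (δ : ℝ) :
    HasDerivAt (fun δ ↦ truncatedPotential g δ x) (δ * kernelAverage bumpPotential g δ x) δ := by
  have hc : Continuous fun s ↦ s * kernelAverage bumpPotential g s x :=
    continuous_id.mul (continuous_kernelAverage isUnitBallKernel_bumpPotential hg x)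
  exact intervalIntegral.integral_hasDerivAt_right (hc.intervalIntegrable 0 δ)
    (hc.stronglyMeasurableAtFilter _ _) hc.continuousAt

lemma eq_of_truncatedPotential_eventuallyEq (hg : Continuous g) (hg' : Continuous g')
    (h : ∀ᶠ δ in 𝓝[>] 0, truncatedPotential g δ x = truncatedPotential g' δ x) :
    g x = g' x := by
  have hc := continuous_kernelAverage isUnitBallKernel_bumpPotential hg x
  have hc' := continuous_kernelAverage isUnitBallKernel_bumpPotential hg' x
  have havg : ∀ᶠ s in 𝓝[>] 0,
      kernelAverage bumpPotential g s x = kernelAverage bumpPotential g' s x := by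
    filter_upwards [eventually_eventually_nhdsWithin.2 h, self_mem_nhdsWithin] with s hs hs_pos
    rw [IsOpen.nhdsWithin_eq isOpen_Ioi hs_pos] at hs
    have hderiv := EventuallyEq.deriv_eq hs
    rw [(hasDerivAt_truncatedPotential hg x s).deriv,
      (hasDerivAt_truncatedPotential hg' x s).deriv] at hderiv
    exact mul_left_cancel₀ (ne_of_gt hs_pos) hderiv
  have hzero := tendsto_nhds_unique ((hc.tendsto 0).mono_left nhdsWithin_le_nhds)
    (((hc'.tendsto 0).mono_left nhdsWithin_le_nhds).congr' (havg.mono fun _ hs ↦ hs.symm))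
  rw [kernelAverage_zero_radius, kernelAverage_zero_radius] at hzero
  exact mul_left_cancel₀ (integral_bumpPotential_pos E).ne' hzero

lemma locallyIntegrable_of_abs_le (hg : Measurable g) (hB : ∀ y, |g y| ≤ B) :
    LocallyIntegrable g :=
  (locallyIntegrable_const B).mono hg.aestronglyMeasurable
    (.of_forall fun y ↦ (hB y).trans (le_abs_self B))

lemma fderiv_mul_kernelAverage_bumpPotential_apply (hg : LocallyIntegrable g) (hs : 0 < s)
    (x e : E) : fderiv ℝ (fun y ↦ s * kernelAverage bumpPotential g s y) x e =
      kernelAverage (fun z ↦ fderiv ℝ bumpPotential z e) g s x := by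
  rw [fderiv_const_mul ((contDiff_kernelAverage isUnitBallKernel_bumpPotential hg hs).differentiable
    (by simp) x), smul_apply, fderiv_kernelAverage_apply isUnitBallKernel_bumpPotential hg hs,
    smul_eq_mul, mul_inv_cancel_left₀ hs.ne']

lemma norm_fderiv_mul_kernelAverage_bumpPotential_le (hg : Measurable g) (hB : ∀ y, |g y| ≤ B)
    (hs : 0 < s) (x : E) :
    ‖fderiv ℝ (fun y ↦ s * kernelAverage bumpPotential g s y) x‖ ≤
      (∫ z : E, |bumpKernel z|) * B := by
  have hB_nonneg : 0 ≤ B := (abs_nonneg _).trans (hB 0)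
  refine ContinuousLinearMap.opNorm_le_bound _
    (mul_nonneg (integral_nonneg fun _ ↦ abs_nonneg _) hB_nonneg) fun e ↦ ?_
  have hk := isUnitBallKernel_bumpPotential.fderiv_apply e
  rw [fderiv_mul_kernelAverage_bumpPotential_apply (locallyIntegrable_of_abs_le hg hB) hs,
    Real.norm_eq_abs, mul_right_comm, ← integral_mul_const]
  refine (abs_kernelAverage_le hk hB s x).trans (mul_le_mul_of_nonneg_right ?_ hB_nonneg)
  exact integral_mono hk.integrable.abs (isUnitBallKernel_bumpKernel.integrable.abs.mul_const _)
    fun z ↦ abs_fderiv_bumpPotential_apply_le z e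

lemma contDiff_one_truncatedPotential_and_fderiv_apply (hg : Measurable g) (hB : ∀ y, |g y| ≤ B)
    (hδ : 0 ≤ δ) : ContDiff ℝ 1 (truncatedPotential g δ) ∧
      ∀ x e, fderiv ℝ (truncatedPotential g δ) x e =
        ∫ s in Ioc 0 δ, kernelAverage (fun z ↦ fderiv ℝ bumpPotential z e) g s x := by
  have hg_int := locallyIntegrable_of_abs_le hg hB
  have heq : truncatedPotential g δ =
      fun x ↦ ∫ s in Ioc 0 δ, s * kernelAverage bumpPotential g s x :=
    funext fun x ↦ intervalIntegral.integral_of_le hδ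
  obtain ⟨hsmooth, hderiv⟩ := contDiffOn_one_integral_Ioc (δ := δ) (isOpen_univ (X := E))
    (H := fun s x ↦ s * kernelAverage bumpPotential g s x)
    (fun s hs x ↦ contDiffAt_fst.mul ((contDiffAt_kernelAverage isUnitBallKernel_bumpPotential
      hg_int hs x).of_le (by simp)))
    (C := δ * ((∫ z : E, |bumpPotential z|) * B)) (fun s hs x _ ↦ by
      rw [abs_mul, abs_of_pos hs.1]
      exact mul_le_mul hs.2 (abs_kernelAverage_le isUnitBallKernel_bumpPotential hB s x)
        (abs_nonneg _) hδ)
    (fun s hs x _ ↦ norm_fderiv_mul_kernelAverage_bumpPotential_le hg hB hs.1 x)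
  rw [heq]
  refine ⟨contDiffOn_univ.1 hsmooth, fun x e ↦ (hderiv x (mem_univ x) e).trans ?_⟩
  exact setIntegral_congr_fun measurableSet_Ioc fun s hs ↦
    fderiv_mul_kernelAverage_bumpPotential_apply hg_int hs.1 x e

lemma contDiffOn_two_truncatedPotential (hg : Measurable g) (hB : ∀ y, |g y| ≤ B) (hδ : 0 ≤ δ)
    {L : NNReal} {x₀ : E} {r : ℝ} (hL : LipschitzOnWith L g (ball x₀ (r + δ))) :
    ContDiffOn ℝ 2 (truncatedPotential g δ) (ball x₀ r) := by
  obtain ⟨hone, hderiv⟩ := contDiff_one_truncatedPotential_and_fderiv_apply hg hB hδ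
  rw [← one_add_one_eq_two, contDiffOn_succ_iff_fderiv_of_isOpen isOpen_ball,
    contDiffOn_clm_apply]
  refine ⟨(hone.differentiable (by norm_num)).differentiableOn, by simp, fun e ↦ ?_⟩
  simp only [hderiv]
  have hk := isUnitBallKernel_bumpPotential.fderiv_apply e
  have hsmooth := contDiffOn_one_integral_Ioc (δ := δ) isOpen_ball
    (fun s hs x ↦ (contDiffAt_kernelAverage hk (locallyIntegrable_of_abs_le hg hB) hs x).of_le
      (by simp)) (fun s _ x _ ↦ abs_kernelAverage_le hk hB s x) fun s hs x hx ↦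
    norm_fderiv_le_of_lipschitzOn ℝ (isOpen_ball.mem_nhds hx) (lipschitzOnWith_kernelAverage hk hg
      hB hs.1.le (hL.mono (ball_subset_ball (add_le_add_right hs.2 r))))
  exact hsmooth.1

end TruncatedPotential

/-! ### The mean value formula -/

section KernelAverageSmooth

variable {E : Type*} [NormedAddCommGroup E] [InnerProductSpace ℝ E] [FiniteDimensional ℝ E]
  [MeasurableSpace E] [BorelSpace E] {k p : E → ℝ}

lemma kernelAverage_fderiv_apply (hk : IsUnitBallKernel k) (hp : ContDiff ℝ 1 p) (s : ℝ)
    (x e : E) : kernelAverage (fun z ↦ fderiv ℝ k z e) p s x =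
      s * kernelAverage k (fun y ↦ fderiv ℝ p y e) s x := by
  have hcomp : ContDiff ℝ 1 fun z ↦ p (x - s • z) := hp.comp (by fun_prop)
  have hderiv (z : E) :
      fderiv ℝ (fun z ↦ p (x - s • z)) z e = -s * fderiv ℝ p (x - s • z) e := by
    have haffine : HasFDerivAt (fun z ↦ x - s • z) (-(s • ContinuousLinearMap.id ℝ E)) z :=
      ((hasFDerivAt_id z).const_smul s).const_sub x
    have h : HasFDerivAt (fun z ↦ p (x - s • z)) _ z :=
      ((hp.differentiable (by norm_num) _).hasFDerivAt).comp z haffine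
    rw [h.fderiv]
    simp
  have hderiv_cont : Continuous fun z ↦ fderiv ℝ (fun z ↦ p (x - s • z)) z e :=
    (hcomp.continuous_fderiv (by norm_num)).clm_apply continuous_const
  have hparts : ∫ z, fderiv ℝ k z e * p (x - s • z) =
      -∫ z, k z * fderiv ℝ (fun z ↦ p (x - s • z)) z e := by
    rw [integral_mul_fderiv_eq_neg_fderiv_mul_of_integrable
      ((hk.fderiv_apply e).integrable_mul hcomp.continuous) (hk.integrable_mul hderiv_cont)
      (hk.integrable_mul hcomp.continuous)
      (fun z _ ↦ hk.contDiff.differentiable (by simp) z)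
      (fun z _ ↦ hcomp.differentiable (by norm_num) z), neg_neg]
  rw [kernelAverage, hparts, kernelAverage, ← integral_neg, ← integral_const_mul]
  exact integral_congr_ae (.of_forall fun z ↦ by simp only [hderiv]; ring)

lemma hasDerivAt_kernelAverage (hk : IsUnitBallKernel k) (hp : ContDiff ℝ 1 p) (s : ℝ) (x : E) :
    HasDerivAt (fun s ↦ kernelAverage k p s x)
      (∫ z, k z * fderiv ℝ p (x - s • z) (-z)) s := by
  have hkc := hk.contDiff.continuous
  have hpc := hp.continuous
  have hderiv_cont : Continuous fun q : ℝ × E ↦ fderiv ℝ p (x - q.1 • q.2) (-q.2) :=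
    ((hp.continuous_fderiv (by norm_num)).comp (by fun_prop)).clm_apply (by fun_prop)
  obtain ⟨C, hC⟩ := ((isCompact_closedBall s 1).prod
    (isCompact_closedBall (0 : E) 1)).exists_bound_of_continuousOn hderiv_cont.continuousOn
  refine (hasDerivAt_integral_of_dominated_loc_of_deriv_le (bound := fun z ↦ |k z| * C)
    (F' := fun s z ↦ k z * fderiv ℝ p (x - s • z) (-z)) (ball_mem_nhds s one_pos)
    (.of_forall fun t ↦ Continuous.aestronglyMeasurable (by fun_prop))
    (hk.integrable_mul (g := fun z ↦ p (x - s • z)) (by fun_prop))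
    (hkc.mul (hderiv_cont.comp (Continuous.prodMk_right s))).aestronglyMeasurable
    (.of_forall fun z t ht ↦ hk.abs_mul_le_abs_mul fun hz ↦ ?_)
    (hk.integrable.abs.mul_const C) (.of_forall fun z t _ ↦ ?_)).2
  · exact hC (t, z) ⟨ball_subset_closedBall ht, by simpa using hz⟩
  · have haffine : HasDerivAt (fun t : ℝ ↦ x - t • z) (-z) t := by
      simpa using ((hasDerivAt_id t).smul_const z).const_sub x
    exact ((hp.differentiable (by norm_num) _).hasFDerivAt.comp_hasDerivAt t haffine).const_mul _

end KernelAverageSmooth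

section MeanValueFormula

variable {N : ℕ} {u g v k p : EuclideanSpace ℝ (Fin N) → ℝ} {Ω : Set (EuclideanSpace ℝ (Fin N))}
  {x : EuclideanSpace ℝ (Fin N)}

lemma integral_bumpKernel_mul_fderiv (hp : ContDiff ℝ 2 p) (s : ℝ)
    (x : EuclideanSpace ℝ (Fin N)) : ∫ z, bumpKernel z * fderiv ℝ p (x - s • z) (-z) =
      s * kernelAverage bumpPotential (laplacian p) s x := by
  let e (i : Fin N) : EuclideanSpace ℝ (Fin N) := EuclideanSpace.single i 1
  have hψ := isUnitBallKernel_bumpPotential (E := EuclideanSpace ℝ (Fin N))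
  have hp' (i : Fin N) : ContDiff ℝ 1 fun y ↦ fderiv ℝ p y (e i) :=
    contDiff_one_fderiv_apply hp (e i)
  have hp'' (i : Fin N) : Continuous fun y ↦ fderiv ℝ (fun y ↦ fderiv ℝ p y (e i)) y (e i) :=
    ((hp' i).continuous_fderiv (by norm_num)).clm_apply continuous_const
  have hcoord (z : EuclideanSpace ℝ (Fin N)) : bumpKernel z * fderiv ℝ p (x - s • z) (-z) =
      ∑ i, fderiv ℝ bumpPotential z (e i) * fderiv ℝ p (x - s • z) (e i) := by
    have hz : z = ∑ i, z i • e i := by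
      simpa using ((EuclideanSpace.basisFun (Fin N) ℝ).sum_repr z).symm
    conv_lhs => enter [2, 2]; rw [hz]
    rw [map_neg, map_sum, mul_neg, Finset.mul_sum, ← Finset.sum_neg_distrib]
    refine Finset.sum_congr rfl fun i _ ↦ ?_
    rw [fderiv_bumpPotential_apply, map_smul, smul_eq_mul]
    simp only [EuclideanSpace.inner_single_right, Real.ringHom_apply, one_mul, neg_mul, neg_inj, e]
    ring
  calc ∫ z, bumpKernel z * fderiv ℝ p (x - s • z) (-z)
      = ∑ i, kernelAverage (fun z ↦ fderiv ℝ bumpPotential z (e i))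
          (fun y ↦ fderiv ℝ p y (e i)) s x := by
        simp only [hcoord]
        exact integral_finsetSum _ fun i _ ↦ (hψ.fderiv_apply (e i)).integrable_mul
          ((hp' i).continuous.comp (by fun_prop))
    _ = ∑ i, s * kernelAverage bumpPotential
          (fun y ↦ fderiv ℝ (fun y ↦ fderiv ℝ p y (e i)) y (e i)) s x :=
        Finset.sum_congr rfl fun i _ ↦ kernelAverage_fderiv_apply hψ (hp' i) s x (e i)
    _ = s * kernelAverage bumpPotential (laplacian p) s x := by
        rw [← Finset.mul_sum]
        congr 1
        simp only [kernelAverage, laplacian, Finset.mul_sum]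
        exact (integral_finsetSum _ fun i _ ↦ hψ.integrable_mul
          ((hp'' i).comp (by fun_prop : Continuous fun z ↦ x - s • z))).symm

/-- The mean value formula on `Ω`: over balls in `Ω`, the average of `u` weighted by `bumpKernel`
differs from the value at the centre by a truncated potential of `g`. This is the integrated form of
`Δu = g`, which makes sense for merely measurable functions. -/
def HasMeanValueFormula (u g : EuclideanSpace ℝ (Fin N) → ℝ)
    (Ω : Set (EuclideanSpace ℝ (Fin N))) : Prop :=
  ∀ x δ, 0 < δ → closedBall x δ ⊆ Ω →
    (∫ z : EuclideanSpace ℝ (Fin N), bumpKernel z) * u x =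
      kernelAverage bumpKernel u δ x - truncatedPotential g δ x

lemma hasMeanValueFormula_of_contDiff (hp : ContDiff ℝ 2 p)
    (Ω : Set (EuclideanSpace ℝ (Fin N))) : HasMeanValueFormula p (laplacian p) Ω := by
  intro x δ _ _
  have hderiv (s : ℝ) : HasDerivAt (fun s ↦ kernelAverage bumpKernel p s x)
      (s * kernelAverage bumpPotential (laplacian p) s x) s :=
    integral_bumpKernel_mul_fderiv hp s x ▸
      hasDerivAt_kernelAverage isUnitBallKernel_bumpKernel (hp.of_le (by norm_num)) s x
  rw [truncatedPotential, intervalIntegral.integral_eq_sub_of_hasDerivAt (fun s _ ↦ hderiv s),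
    kernelAverage_zero_radius, sub_sub_cancel]
  exact (continuous_id.mul (continuous_kernelAverage isUnitBallKernel_bumpPotential
    (continuous_laplacian hp) x)).intervalIntegrable _ _

namespace HasMeanValueFormula

lemma congr (h : HasMeanValueFormula u g Ω) (hu : EqOn u v Ω) (hg : EqOn g k Ω) :
    HasMeanValueFormula v k Ω := by
  intro x δ hδ hx
  rw [← hu (hx (mem_closedBall_self hδ.le)), h x δ hδ hx,
    kernelAverage_congr isUnitBallKernel_bumpKernel hδ.le (hu.mono hx),
    truncatedPotential_congr hδ.le (hg.mono hx)]

lemma mono (h : HasMeanValueFormula u g Ω) {Ω' : Set (EuclideanSpace ℝ (Fin N))} (hΩ : Ω' ⊆ Ω) :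
    HasMeanValueFormula u g Ω' :=
  fun x δ hδ hx ↦ h x δ hδ (hx.trans hΩ)

lemma eq_of_continuous (h : HasMeanValueFormula u g Ω) (h' : HasMeanValueFormula u k Ω)
    (hg : Continuous g) (hk : Continuous k) (hΩ : Ω ∈ 𝓝 x) : g x = k x := by
  refine eq_of_truncatedPotential_eventuallyEq hg hk ?_
  obtain ⟨ε, hε, hball⟩ := Metric.nhds_basis_closedBall.mem_iff.1 hΩ
  filter_upwards [Ioc_mem_nhdsGT hε] with δ hδ
  have hsub := (closedBall_subset_closedBall hδ.2).trans hball
  linarith [h x δ hδ.1 hsub, h' x δ hδ.1 hsub]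

end HasMeanValueFormula

lemma exists_contDiff_eventuallyEq {n : ℕ∞} (hu : ContDiffOn ℝ n u Ω) (hΩ : Ω ∈ 𝓝 x) :
    ∃ v, ContDiff ℝ n v ∧ v =ᶠ[𝓝 x] u := by
  obtain ⟨r, hr, hball⟩ := Metric.nhds_basis_closedBall.mem_iff.1 (interior_mem_nhds.2 hΩ)
  let η : ContDiffBump x := ⟨r / 2, r, half_pos hr, half_lt_self hr⟩
  refine ⟨fun y ↦ η y * u y, contDiff_iff_contDiffAt.2 fun y ↦ ?_, ?_⟩
  · by_cases hy : y ∈ tsupport η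
    · have hy' : Ω ∈ 𝓝 y := mem_interior_iff_mem_nhds.1 (hball (η.tsupport_eq ▸ hy))
      exact η.contDiff.contDiffAt.mul (hu.contDiffAt hy')
    · refine (contDiffAt_const (c := (0 : ℝ))).congr_of_eventuallyEq ?_
      filter_upwards [notMem_tsupport_iff_eventuallyEq.1 hy] with z hz
      simp [hz]
  · filter_upwards [η.eventuallyEq_one] with y hy
    simp [hy]

theorem HasMeanValueFormula.laplacian_eq (h : HasMeanValueFormula u g Ω)
    (hu : ContDiffOn ℝ 2 u Ω) (hg : ContinuousOn g Ω) (hΩ : Ω ∈ 𝓝 x) : laplacian u x = g x := by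
  obtain ⟨v, hv, hvu⟩ := exists_contDiff_eventuallyEq (n := 2) (mod_cast hu) hΩ
  obtain ⟨k, hk, hkg⟩ :=
    exists_contDiff_eventuallyEq (n := 0) (mod_cast contDiffOn_zero.2 hg) hΩ
  have hk_cont : Continuous k := hk.continuous
  let V := Ω ∩ {y | v y = u y ∧ k y = g y}
  have hV : V ∈ 𝓝 x := inter_mem hΩ (hvu.and hkg)
  have hv_formula := hasMeanValueFormula_of_contDiff hv V
  have hk_formula : HasMeanValueFormula v k V :=
    (h.mono inter_subset_left).congr (fun y hy ↦ hy.2.1.symm) fun y hy ↦ hy.2.2.symm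
  rw [← laplacian_congr hvu, ← hkg.eq_of_nhds]
  exact hv_formula.eq_of_continuous hk_formula (continuous_laplacian hv) hk_cont hV

end MeanValueFormula

/-! ### Mild solutions and their regularity -/

section MildSolution

variable {N : ℕ} {u g : EuclideanSpace ℝ (Fin N) → ℝ} {K : Set (EuclideanSpace ℝ (Fin N))}
  {x : EuclideanSpace ℝ (Fin N)} {B B' : ℝ}

/-- A solution of `Δu = g` in the sense of the mean value formula, with `u` and `g` bounded and
measurable on `K`. Values off `K` are irrelevant, so measurability is imposed on the extensions by
zero. Unlike `HasApproxLaplacianOn`, this notion is stable under bounded pointwise limits. -/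
structure IsMildSolution (u g : EuclideanSpace ℝ (Fin N) → ℝ)
    (K : Set (EuclideanSpace ℝ (Fin N))) : Prop where
  measurable : Measurable (K.indicator u)
  measurable_source : Measurable (K.indicator g)
  bounded : ∃ B, ∀ x ∈ K, |u x| ≤ B
  bounded_source : ∃ B, ∀ x ∈ K, |g x| ≤ B
  hasMeanValueFormula : HasMeanValueFormula u g K

lemma abs_indicator_le {α : Type*} {s : Set α} {f : α → ℝ} {B : ℝ} (h : ∀ y ∈ s, |f y| ≤ B)
    (y : α) : |s.indicator f y| ≤ |B| := by
  by_cases hy : y ∈ s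
  · simpa [hy] using (h y hy).trans (le_abs_self B)
  · simp [hy]

lemma tendsto_indicator {α : Type*} {s : Set α} {f : ℕ → α → ℝ} {f' : α → ℝ}
    (h : ∀ y ∈ s, Tendsto (fun n ↦ f n y) atTop (𝓝 (f' y))) (y : α) :
    Tendsto (fun n ↦ s.indicator (f n) y) atTop (𝓝 (s.indicator f' y)) := by
  by_cases hy : y ∈ s
  · simpa [hy] using h y hy
  · simp [hy]

namespace IsMildSolution

theorem of_tendsto {u g : ℕ → EuclideanSpace ℝ (Fin N) → ℝ}
    {u' g' : EuclideanSpace ℝ (Fin N) → ℝ} (h : ∀ n, IsMildSolution (u n) (g n) K)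
    (hu : ∀ n, ∀ y ∈ K, |u n y| ≤ B) (hg : ∀ n, ∀ y ∈ K, |g n y| ≤ B')
    (hulim : ∀ y ∈ K, Tendsto (fun n ↦ u n y) atTop (𝓝 (u' y)))
    (hglim : ∀ y ∈ K, Tendsto (fun n ↦ g n y) atTop (𝓝 (g' y))) : IsMildSolution u' g' K where
  measurable := measurable_of_tendsto_metrizable (fun n ↦ (h n).measurable)
    (tendsto_pi_nhds.2 (tendsto_indicator hulim))
  measurable_source := measurable_of_tendsto_metrizable (fun n ↦ (h n).measurable_source)
    (tendsto_pi_nhds.2 (tendsto_indicator hglim))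
  bounded := ⟨B, fun y hy ↦ le_of_tendsto' (hulim y hy).abs fun n ↦ hu n y hy⟩
  bounded_source := ⟨B', fun y hy ↦ le_of_tendsto' (hglim y hy).abs fun n ↦ hg n y hy⟩
  hasMeanValueFormula := by
    have hformula : HasMeanValueFormula (K.indicator u') (K.indicator g') K := by
      intro x δ hδ hx
      refine tendsto_nhds_unique ((tendsto_indicator hulim x).const_mul _)
        (((tendsto_kernelAverage isUnitBallKernel_bumpKernel (fun n ↦ (h n).measurable)
          (fun n ↦ abs_indicator_le (hu n)) (tendsto_indicator hulim) δ x).sub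
          (tendsto_truncatedPotential (fun n ↦ (h n).measurable_source)
            (fun n ↦ abs_indicator_le (hg n)) (tendsto_indicator hglim) δ x)).congr
          fun n ↦ ?_)
      exact ((h n).hasMeanValueFormula.congr (eqOn_indicator.symm) (eqOn_indicator.symm)
        x δ hδ hx).symm
    exact hformula.congr eqOn_indicator eqOn_indicator

lemma of_contDiff (hu : ContDiff ℝ 2 u) (hK : IsCompact K) :
    IsMildSolution u (laplacian u) K where
  measurable := hu.continuous.measurable.indicator hK.measurableSet
  measurable_source := (continuous_laplacian hu).measurable.indicator hK.measurableSet
  bounded := hK.exists_bound_of_continuousOn hu.continuous.continuousOn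
  bounded_source := hK.exists_bound_of_continuousOn (continuous_laplacian hu).continuousOn
  hasMeanValueFormula := hasMeanValueFormula_of_contDiff hu K

lemma of_hasApproxLaplacianOn (h : HasApproxLaplacianOn u g K) (hK : IsCompact K)
    (hg : ContinuousOn g K) : IsMildSolution u g K := by
  obtain ⟨Bu, hBu⟩ := hK.exists_bound_of_continuousOn h.continuousOn
  obtain ⟨Bg, hBg⟩ := hK.exists_bound_of_continuousOn hg
  obtain ⟨p, hp, hpu, hpg⟩ := h
  obtain ⟨n₀, hn₀⟩ := eventually_atTop.1 ((Metric.tendstoUniformlyOn_iff.1 hpu 1 one_pos).and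
    (Metric.tendstoUniformlyOn_iff.1 hpg 1 one_pos))
  have hbound {a b B : ℝ} (ha : |a| ≤ B) (hab : dist a b < 1) : |b| ≤ B + 1 := by
    rw [Real.dist_eq, abs_sub_comm] at hab
    linarith [abs_sub_abs_le_abs_sub b a]
  have hshift {f : ℕ → ℝ} {a : ℝ} (hf : Tendsto f atTop (𝓝 a)) :
      Tendsto (fun n ↦ f (n + n₀)) atTop (𝓝 a) := (tendsto_add_atTop_iff_nat n₀).2 hf
  exact of_tendsto (u := fun n ↦ p (n + n₀)) (g := fun n ↦ laplacian (p (n + n₀)))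
    (fun n ↦ of_contDiff (hp _) hK)
    (fun n y hy ↦ hbound (hBu y hy) ((hn₀ _ (Nat.le_add_left n₀ n)).1 y hy))
    (fun n y hy ↦ hbound (hBg y hy) ((hn₀ _ (Nat.le_add_left n₀ n)).2 y hy))
    (fun y hy ↦ hshift (hpu.tendsto_at hy)) fun y hy ↦ hshift (hpg.tendsto_at hy)

lemma eq_kernelAverage_sub_truncatedPotential (h : IsMildSolution u g K) {δ : ℝ} (hδ : 0 < δ)
    (hx : closedBall x δ ⊆ K) : u x = (∫ z : EuclideanSpace ℝ (Fin N), bumpKernel z)⁻¹ *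
      (kernelAverage bumpKernel (K.indicator u) δ x - truncatedPotential (K.indicator g) δ x) := by
  rw [eq_inv_mul_iff_mul_eq₀ (integral_bumpKernel_pos _).ne', h.hasMeanValueFormula x δ hδ hx,
    kernelAverage_congr isUnitBallKernel_bumpKernel hδ.le (eqOn_indicator.symm.mono hx),
    truncatedPotential_congr hδ.le (eqOn_indicator.symm.mono hx)]

lemma contDiffAt_of_truncatedPotential (h : IsMildSolution u g K) {n : ℕ∞} {δ : ℝ} (hδ : 0 < δ)
    (hx : closedBall x (δ + δ) ⊆ K)
    (hpot : ContDiffOn ℝ n (truncatedPotential (K.indicator g) δ) (ball x δ)) :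
    ContDiffAt ℝ n u x := by
  obtain ⟨B, hB⟩ := h.bounded
  have haverage : ContDiff ℝ n (kernelAverage bumpKernel (K.indicator u) δ) :=
    (contDiff_kernelAverage isUnitBallKernel_bumpKernel
      (locallyIntegrable_of_abs_le h.measurable (abs_indicator_le hB)) hδ).of_le
      (mod_cast le_top)
  have hrep : EqOn u (fun y ↦ (∫ z : EuclideanSpace ℝ (Fin N), bumpKernel z)⁻¹ *
      (kernelAverage bumpKernel (K.indicator u) δ y - truncatedPotential (K.indicator g) δ y))
      (ball x δ) := fun y hy ↦ h.eq_kernelAverage_sub_truncatedPotential hδ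
    ((closedBall_subset_closedBall' (by linarith [mem_ball.1 hy])).trans hx)
  exact ((contDiffOn_const.mul (haverage.contDiffOn.sub hpot)).congr hrep).contDiffAt
    (ball_mem_nhds x hδ)

lemma contDiffAt_one (h : IsMildSolution u g K) (hK : K ∈ 𝓝 x) : ContDiffAt ℝ 1 u x := by
  obtain ⟨B, hB⟩ := h.bounded_source
  obtain ⟨ε, hε, hball⟩ := Metric.nhds_basis_closedBall.mem_iff.1 hK
  exact_mod_cast h.contDiffAt_of_truncatedPotential (n := 1) (half_pos hε)
    (by rwa [add_halves]) (contDiff_one_truncatedPotential_and_fderiv_apply h.measurable_source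
      (abs_indicator_le hB) (half_pos hε).le).1.contDiffOn

lemma contDiffAt_two (h : IsMildSolution u g K) (hK : K ∈ 𝓝 x) {L : NNReal}
    {V : Set (EuclideanSpace ℝ (Fin N))} (hV : V ∈ 𝓝 x) (hg : LipschitzOnWith L g V) :
    ContDiffAt ℝ 2 u x := by
  obtain ⟨B, hB⟩ := h.bounded_source
  obtain ⟨ε, hε, hball⟩ := Metric.nhds_basis_closedBall.mem_iff.1 (inter_mem hK hV)
  have hg' : LipschitzOnWith L (K.indicator g) (ball x (ε / 2 + ε / 2)) := by
    rw [add_halves]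
    intro y hy z hz
    have hy' := hball (ball_subset_closedBall hy)
    have hz' := hball (ball_subset_closedBall hz)
    rw [indicator_of_mem hy'.1, indicator_of_mem hz'.1]
    exact hg hy'.2 hz'.2
  exact_mod_cast h.contDiffAt_of_truncatedPotential (n := 2) (half_pos hε)
    (by rw [add_halves]; exact hball.trans inter_subset_left)
    (contDiffOn_two_truncatedPotential h.measurable_source (abs_indicator_le hB)
      (half_pos hε).le hg')

theorem contDiffOn_two_and_laplacian_eq (h : IsMildSolution u g K)
    {Ω : Set (EuclideanSpace ℝ (Fin N))} (hΩ : IsOpen Ω) (hΩK : Ω ⊆ K)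
    (hg : LocallyLipschitzOn Ω g) : ContDiffOn ℝ 2 u Ω ∧ ∀ x ∈ Ω, laplacian u x = g x := by
  have hu : ContDiffOn ℝ 2 u Ω := fun x hx ↦ by
    obtain ⟨L, V, hV, hL⟩ := hg hx
    rw [hΩ.nhdsWithin_eq hx] at hV
    exact (h.contDiffAt_two (mem_of_superset (hΩ.mem_nhds hx) hΩK) hV hL).contDiffWithinAt
  exact ⟨hu, fun x hx ↦ (h.hasMeanValueFormula.mono hΩK).laplacian_eq hu hg.continuousOn
    (hΩ.mem_nhds hx)⟩

end IsMildSolution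

end MildSolution

/-! ### Barriers and the monotone Picard iteration -/

section Barriers

variable {N : ℕ} {R l : ℝ} {d e d' e' u v g : EuclideanSpace ℝ (Fin N) → ℝ}

/-- Ordered `C²` barriers on a closed ball which coincide on the bounding sphere. -/
structure IsBarrierPair (R : ℝ) (d e : EuclideanSpace ℝ (Fin N) → ℝ) : Prop where
  contDiff_lower : ContDiff ℝ 2 d
  contDiff_upper : ContDiff ℝ 2 e
  le : ∀ x ∈ closedBall 0 R, d x ≤ e x
  eq_on_sphere : ∀ x ∈ sphere 0 R, d x = e x

/-- `u` lies between `d` and `e` on the closed ball of radius `R`. -/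
def IsBetween (R : ℝ) (d e u : EuclideanSpace ℝ (Fin N) → ℝ) : Prop :=
  ∀ x ∈ closedBall 0 R, u x ∈ Icc (d x) (e x)

lemma IsBarrierPair.isBetween_upper (h : IsBarrierPair R d e) : IsBetween R d e e :=
  fun x hx ↦ ⟨h.le x hx, le_rfl⟩

lemma IsBetween.eq_on_sphere (hu : IsBetween R d e u) (h : IsBarrierPair R d e) :
    ∀ x ∈ sphere 0 R, u x = e x := fun x hx ↦
  let hux := hu x (sphere_subset_closedBall hx)
  hux.2.antisymm (h.eq_on_sphere x hx ▸ hux.1)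

lemma IsBetween.of_tendsto {u : ℕ → EuclideanSpace ℝ (Fin N) → ℝ}
    (hu : ∀ n, IsBetween R d e (u n))
    (hlim : ∀ x ∈ closedBall 0 R, Tendsto (fun n ↦ u n x) atTop (𝓝 (v x))) :
    IsBetween R d e v :=
  fun x hx ↦ isClosed_Icc.mem_of_tendsto (hlim x hx) (.of_forall fun n ↦ hu n x hx)

lemma IsBetween.continuousOn_closedBall (hu : IsBetween R d e u) (h : IsBarrierPair R d e)
    (hcont : ContinuousOn u (ball 0 R)) : ContinuousOn u (closedBall 0 R) := by
  intro x hx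
  rcases ball_union_sphere.symm.subset hx with hball | hsphere
  · exact (hcont.continuousAt (isOpen_ball.mem_nhds hball)).continuousWithinAt
  have hlower := h.contDiff_lower.continuous.continuousWithinAt (s := closedBall 0 R) (x := x)
  have hupper := h.contDiff_upper.continuous.continuousWithinAt (s := closedBall 0 R) (x := x)
  rw [ContinuousWithinAt, hu.eq_on_sphere h x hsphere]
  rw [ContinuousWithinAt, h.eq_on_sphere x hsphere] at hlower
  exact tendsto_of_tendsto_of_tendsto_of_le_of_le' hlower hupper
    (eventually_mem_nhdsWithin.mono fun y hy ↦ (hu y hy).1)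
    (eventually_mem_nhdsWithin.mono fun y hy ↦ (hu y hy).2)

/-- The triples `(x, s, t)` with `x` in the closed ball, `s` between `d x` and `e x`, and `t`
between `d' x` and `e' x`: the values seen by the nonlinearity `F(x, u, v)`. -/
def barrierRegion (R : ℝ) (d e d' e' : EuclideanSpace ℝ (Fin N) → ℝ) :
    Set (EuclideanSpace ℝ (Fin N) × ℝ × ℝ) :=
  {p | p.1 ∈ closedBall 0 R ∧ p.2.1 ∈ Icc (d p.1) (e p.1) ∧ p.2.2 ∈ Icc (d' p.1) (e' p.1)}

lemma isClosed_setOf_mem_Icc {X : Type*} [TopologicalSpace X] {f g h : X → ℝ}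
    (hf : Continuous f) (hg : Continuous g) (hh : Continuous h) :
    IsClosed {p | f p ∈ Icc (g p) (h p)} :=
  (isClosed_le hg hf).inter (isClosed_le hf hh)

lemma exists_Icc_subset_of_continuous (hd : Continuous d) (he : Continuous e) (R : ℝ) :
    ∃ a b, ∀ x ∈ closedBall 0 R, Icc (d x) (e x) ⊆ Icc a b := by
  have hK := isCompact_closedBall (0 : EuclideanSpace ℝ (Fin N)) R
  obtain ⟨a, ha⟩ := hK.bddBelow_image hd.continuousOn
  obtain ⟨b, hb⟩ := hK.bddAbove_image he.continuousOn
  exact ⟨a, b, fun x hx ↦ Icc_subset_Icc (ha (mem_image_of_mem d hx)) (hb (mem_image_of_mem e hx))⟩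

lemma isCompact_barrierRegion (h : IsBarrierPair R d e) (h' : IsBarrierPair R d' e') :
    IsCompact (barrierRegion R d e d' e') := by
  have hd := h.contDiff_lower.continuous
  have he := h.contDiff_upper.continuous
  have hd' := h'.contDiff_lower.continuous
  have he' := h'.contDiff_upper.continuous
  obtain ⟨a, b, hab⟩ := exists_Icc_subset_of_continuous hd he R
  obtain ⟨a', b', hab'⟩ := exists_Icc_subset_of_continuous hd' he' R
  refine ((isCompact_closedBall 0 R).prod (isCompact_Icc.prod isCompact_Icc)).of_isClosed_subset ?_
    fun p hp ↦ ⟨hp.1, hab p.1 hp.1 hp.2.1, hab' p.1 hp.1 hp.2.2⟩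
  exact (isClosed_closedBall.preimage continuous_fst).inter
    ((isClosed_setOf_mem_Icc (by fun_prop) (hd.comp continuous_fst) (he.comp continuous_fst)).inter
      (isClosed_setOf_mem_Icc (by fun_prop) (hd'.comp continuous_fst) (he'.comp continuous_fst)))

lemma DirichletSolvable.exists_eq_on_sphere (h : DirichletSolvable N R l) (he : ContDiff ℝ 2 e)
    (hg : ContinuousOn g (closedBall 0 R)) :
    ∃ u, HasApproxLaplacianOn u (l • u + g) (closedBall 0 R) ∧ ∀ x ∈ sphere 0 R, u x = e x := by
  obtain ⟨w, hw, hw_bdry⟩ := h (g + l • e - laplacian e)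
    ((hg.add (he.continuous.continuousOn.const_smul l)).sub (continuous_laplacian he).continuousOn)
  refine ⟨w + e, (hw.add (.of_contDiff he _)).congr (fun _ _ ↦ rfl) fun x _ ↦ ?_,
    fun x hx ↦ by simp [hw_bdry x hx]⟩
  simp only [Pi.add_apply, Pi.sub_apply, Pi.smul_apply, smul_eq_mul]
  ring

end Barriers

section PicardIteration

variable {N : ℕ} {R l : ℝ} {L : NNReal} {F : EuclideanSpace ℝ (Fin N) → ℝ → ℝ → ℝ}
  {d e d' e' u v u' v' : EuclideanSpace ℝ (Fin N) → ℝ}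

/-- The conditions on `F` under which the Picard iteration for `Δu = F(x, u, v)` is monotone: on
the region bounded by the barriers, `F` is Lipschitz and decreases in `v`, and the lower (upper)
barriers form a sub-solution (super-solution). -/
structure IsPicardAdmissible (R : ℝ) (F : EuclideanSpace ℝ (Fin N) → ℝ → ℝ → ℝ)
    (d e d' e' : EuclideanSpace ℝ (Fin N) → ℝ) (L : NNReal) : Prop where
  lipschitzOnWith : LipschitzOnWith L (fun p ↦ F p.1 p.2.1 p.2.2) (barrierRegion R d e d' e')
  antitoneOn : ∀ x ∈ closedBall 0 R, ∀ s ∈ Icc (d x) (e x), AntitoneOn (F x s) (Icc (d' x) (e' x))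
  le_laplacian_lower : ∀ x ∈ ball 0 R, F x (d x) (d' x) ≤ laplacian d x
  laplacian_upper_le : ∀ x ∈ ball 0 R, laplacian e x ≤ F x (e x) (e' x)

/-- `u` is a super-solution of `Δu = F(x, u, v)` for the given `v`. -/
def IsSuperSolution (R : ℝ) (F : EuclideanSpace ℝ (Fin N) → ℝ → ℝ → ℝ)
    (u v : EuclideanSpace ℝ (Fin N) → ℝ) : Prop :=
  ∃ g, HasApproxLaplacianOn u g (closedBall 0 R) ∧ ∀ x ∈ ball 0 R, g x ≤ F x (u x) (v x)

/-- One step of the Picard iteration: `u'` solves `Δu' - l u' = F(x, u, v) - l u` with the boundary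
values of `u`. -/
def IsPicardStep (R : ℝ) (F : EuclideanSpace ℝ (Fin N) → ℝ → ℝ → ℝ) (l : ℝ)
    (u v u' : EuclideanSpace ℝ (Fin N) → ℝ) : Prop :=
  HasApproxLaplacianOn u' (fun x ↦ F x (u x) (v x) + l * (u' x - u x)) (closedBall 0 R) ∧
    ∀ x ∈ sphere 0 R, u' x = u x

lemma IsSuperSolution.continuousOn (h : IsSuperSolution R F u v) :
    ContinuousOn u (closedBall 0 R) :=
  let ⟨_, hg, _⟩ := h
  hg.continuousOn

lemma IsPicardStep.le (h : IsPicardStep R F l u v u') (hN : 0 < N) (hR : R ≠ 0) (hl : 0 ≤ l)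
    (hu : IsSuperSolution R F u v) : ∀ x ∈ closedBall 0 R, u' x ≤ u x := by
  obtain ⟨g, hg, hgF⟩ := hu
  have hdiff := (h.1.sub hg).nonpos_of_closedBall hN (fun x hx ↦ by simp [h.2 x hx])
    (fun x hx hpos ↦ by
      simp only [Pi.sub_apply] at hpos ⊢
      linarith [hgF x hx, mul_nonneg hl hpos.le]) hR
  exact fun x hx ↦ sub_nonpos.1 (hdiff x hx)

namespace IsPicardAdmissible

lemma sub_le_mul_sub (h : IsPicardAdmissible R F d e d' e' L) {x : EuclideanSpace ℝ (Fin N)}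
    (hx : x ∈ closedBall 0 R) {s s' t : ℝ} (hs : s ∈ Icc (d x) (e x)) (hs' : s' ∈ Icc (d x) (e x))
    (hle : s ≤ s') (ht : t ∈ Icc (d' x) (e' x)) : F x s' t - F x s t ≤ L * (s' - s) := by
  have hdist := h.lipschitzOnWith.dist_le_mul (x, s', t) ⟨hx, hs', ht⟩ (x, s, t) ⟨hx, hs, ht⟩
  simp only [Prod.dist_eq, dist_self, Real.dist_eq, abs_of_nonneg (sub_nonneg.2 hle),
    max_eq_left (sub_nonneg.2 hle), max_eq_right (sub_nonneg.2 hle)] at hdist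
  exact (le_abs_self _).trans hdist

lemma continuousOn_comp (h : IsPicardAdmissible R F d e d' e' L) (hu : IsBetween R d e u)
    (hv : IsBetween R d' e' v) (hu_cont : ContinuousOn u (closedBall 0 R))
    (hv_cont : ContinuousOn v (closedBall 0 R)) :
    ContinuousOn (fun x ↦ F x (u x) (v x)) (closedBall 0 R) :=
  h.lipschitzOnWith.continuousOn.comp (continuousOn_id.prodMk (hu_cont.prodMk hv_cont))
    fun x hx ↦ ⟨hx, hu x hx, hv x hx⟩

lemma apply_le_laplacian_lower_add (h : IsPicardAdmissible R F d e d' e' L)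
    {x : EuclideanSpace ℝ (Fin N)} (hx : x ∈ ball 0 R) {s t : ℝ} (hs : s ∈ Icc (d x) (e x))
    (ht : t ∈ Icc (d' x) (e' x)) : F x s t ≤ laplacian d x + L * (s - d x) := by
  have hxK := ball_subset_closedBall hx
  have hd : d x ∈ Icc (d x) (e x) := ⟨le_rfl, hs.1.trans hs.2⟩
  have hlip := h.sub_le_mul_sub hxK hd hs hs.1 ht
  have hanti := h.antitoneOn x hxK (d x) hd ⟨le_rfl, ht.1.trans ht.2⟩ ht ht.1
  linarith [h.le_laplacian_lower x hx]

lemma lower_le (h : IsPicardAdmissible R F d e d' e' L) (hb : IsBarrierPair R d e)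
    (hN : 0 < N) (hR : R ≠ 0) (hu : IsBetween R d e u) (hv : IsBetween R d' e' v)
    (hstep : IsPicardStep R F L u v u') : ∀ x ∈ closedBall 0 R, d x ≤ u' x := by
  have hdiff := ((HasApproxLaplacianOn.of_contDiff hb.contDiff_lower _).sub
    hstep.1).nonpos_of_closedBall hN
    (fun x hx ↦ by simp [hstep.2 x hx, hu.eq_on_sphere hb x hx, hb.eq_on_sphere x hx])
    (fun x hx hpos ↦ by
      have hxK := ball_subset_closedBall hx
      simp only [Pi.sub_apply] at hpos ⊢
      linarith [h.apply_le_laplacian_lower_add hx (hu x hxK) (hv x hxK),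
        mul_nonneg L.coe_nonneg hpos.le]) hR
  exact fun x hx ↦ sub_nonpos.1 (hdiff x hx)

lemma exists_picardStep (h : IsPicardAdmissible R F d e d' e' L) (hb : IsBarrierPair R d e)
    (hN : 0 < N) (hR : 0 < R) (hu : IsBetween R d e u) (hv : IsBetween R d' e' v)
    (hu_super : IsSuperSolution R F u v) (hv_cont : ContinuousOn v (closedBall 0 R)) :
    ∃ u', IsPicardStep R F L u v u' ∧ IsBetween R d e u' ∧ ∀ x ∈ closedBall 0 R, u' x ≤ u x := by
  have hcont := (h.continuousOn_comp hu hv hu_super.continuousOn hv_cont).sub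
    (hu_super.continuousOn.const_smul (L : ℝ))
  obtain ⟨u', hu', hu'_bdry⟩ := (dirichletSolvable hN hR L.coe_nonneg).exists_eq_on_sphere
    hb.contDiff_upper hcont
  have hstep : IsPicardStep R F L u v u' := by
    refine ⟨hu'.congr (fun _ _ ↦ rfl) fun x _ ↦ ?_, fun x hx ↦ ?_⟩
    · simp only [Pi.add_apply, Pi.sub_apply, Pi.smul_apply, smul_eq_mul]
      ring
    · rw [hu'_bdry x hx, hu.eq_on_sphere hb x hx]
  have hle := hstep.le hN hR.ne' L.coe_nonneg hu_super
  exact ⟨u', hstep, fun x hx ↦ ⟨h.lower_le hb hN hR.ne' hu hv hstep x hx,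
    (hle x hx).trans (hu x hx).2⟩, hle⟩

lemma isSuperSolution_of_isPicardStep (h : IsPicardAdmissible R F d e d' e' L)
    (hstep : IsPicardStep R F L u v u') (hu : IsBetween R d e u) (hu' : IsBetween R d e u')
    (hv : IsBetween R d' e' v) (hv' : IsBetween R d' e' v')
    (hle : ∀ x ∈ closedBall 0 R, u' x ≤ u x) (hle' : ∀ x ∈ closedBall 0 R, v' x ≤ v x) :
    IsSuperSolution R F u' v' := by
  refine ⟨_, hstep.1, fun x hx ↦ ?_⟩
  have hxK := ball_subset_closedBall hx
  have hlip := h.sub_le_mul_sub hxK (hu' x hxK) (hu x hxK) (hle x hxK) (hv x hxK)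
  have hanti := h.antitoneOn x hxK (u' x) (hu' x hxK) (hv' x hxK) (hv x hxK) (hle' x hxK)
  linarith

end IsPicardAdmissible

end PicardIteration

section PicardSequence

variable {N : ℕ} {R : ℝ} {L₁ L₂ : NNReal} {F₁ F₂ : EuclideanSpace ℝ (Fin N) → ℝ → ℝ → ℝ}
  {d e d₁ e₁ d₂ e₂ u v : EuclideanSpace ℝ (Fin N) → ℝ}

/-- The invariant of the Picard iteration for the system `Δu = F₁(x, u, v)`, `Δv = F₂(x, v, u)`:
a pair of super-solutions between the barriers. -/
structure IsPicardState (R : ℝ) (F₁ F₂ : EuclideanSpace ℝ (Fin N) → ℝ → ℝ → ℝ)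
    (d₁ e₁ d₂ e₂ u v : EuclideanSpace ℝ (Fin N) → ℝ) : Prop where
  isBetween_fst : IsBetween R d₁ e₁ u
  isBetween_snd : IsBetween R d₂ e₂ v
  isSuperSolution_fst : IsSuperSolution R F₁ u v
  isSuperSolution_snd : IsSuperSolution R F₂ v u

lemma isPicardState_upper (hb₁ : IsBarrierPair R d₁ e₁) (hb₂ : IsBarrierPair R d₂ e₂)
    (h₁ : IsPicardAdmissible R F₁ d₁ e₁ d₂ e₂ L₁) (h₂ : IsPicardAdmissible R F₂ d₂ e₂ d₁ e₁ L₂) :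
    IsPicardState R F₁ F₂ d₁ e₁ d₂ e₂ e₁ e₂ where
  isBetween_fst := hb₁.isBetween_upper
  isBetween_snd := hb₂.isBetween_upper
  isSuperSolution_fst := ⟨_, .of_contDiff hb₁.contDiff_upper _, h₁.laplacian_upper_le⟩
  isSuperSolution_snd := ⟨_, .of_contDiff hb₂.contDiff_upper _, h₂.laplacian_upper_le⟩

/-- One Picard step in both components, together with its monotonicity. -/
structure IsPicardSystemStep (R : ℝ) (F₁ F₂ : EuclideanSpace ℝ (Fin N) → ℝ → ℝ → ℝ) (l₁ l₂ : ℝ)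
    (u v u' v' : EuclideanSpace ℝ (Fin N) → ℝ) : Prop where
  isPicardStep_fst : IsPicardStep R F₁ l₁ u v u'
  isPicardStep_snd : IsPicardStep R F₂ l₂ v u v'
  le_fst : ∀ x ∈ closedBall 0 R, u' x ≤ u x
  le_snd : ∀ x ∈ closedBall 0 R, v' x ≤ v x

lemma IsPicardState.exists_step (h : IsPicardState R F₁ F₂ d₁ e₁ d₂ e₂ u v) (hN : 0 < N)
    (hR : 0 < R) (hb₁ : IsBarrierPair R d₁ e₁) (hb₂ : IsBarrierPair R d₂ e₂)
    (h₁ : IsPicardAdmissible R F₁ d₁ e₁ d₂ e₂ L₁) (h₂ : IsPicardAdmissible R F₂ d₂ e₂ d₁ e₁ L₂) :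
    ∃ u' v', IsPicardState R F₁ F₂ d₁ e₁ d₂ e₂ u' v' ∧
      IsPicardSystemStep R F₁ F₂ L₁ L₂ u v u' v' := by
  obtain ⟨hu, hv, hu_super, hv_super⟩ := h
  obtain ⟨u', hstep_u, hu', hle_u⟩ :=
    h₁.exists_picardStep hb₁ hN hR hu hv hu_super hv_super.continuousOn
  obtain ⟨v', hstep_v, hv', hle_v⟩ :=
    h₂.exists_picardStep hb₂ hN hR hv hu hv_super hu_super.continuousOn
  exact ⟨u', v', ⟨hu', hv', h₁.isSuperSolution_of_isPicardStep hstep_u hu hu' hv hv' hle_u hle_v,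
    h₂.isSuperSolution_of_isPicardStep hstep_v hv hv' hu hu' hle_v hle_u⟩,
    hstep_u, hstep_v, hle_u, hle_v⟩

lemma exists_seq_of_forall_exists {α : Type*} {p : α → Prop} {r : α → α → Prop} {a : α} (ha : p a)
    (h : ∀ a, p a → ∃ b, p b ∧ r a b) : ∃ s : ℕ → α, ∀ n, p (s n) ∧ r (s n) (s (n + 1)) := by
  choose! next hp hr using h
  have hs (n : ℕ) : p (next^[n] a) := by
    induction n with
    | zero => exact ha
    | succ n ih => rw [iterate_succ_apply']; exact hp _ ih
  exact ⟨fun n ↦ next^[n] a, fun n ↦ ⟨hs n, by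
    simpa only [iterate_succ_apply'] using hr _ (hs n)⟩⟩

lemma exists_picard_sequence (hN : 0 < N) (hR : 0 < R) (hb₁ : IsBarrierPair R d₁ e₁)
    (hb₂ : IsBarrierPair R d₂ e₂) (h₁ : IsPicardAdmissible R F₁ d₁ e₁ d₂ e₂ L₁)
    (h₂ : IsPicardAdmissible R F₂ d₂ e₂ d₁ e₁ L₂) :
    ∃ u v : ℕ → EuclideanSpace ℝ (Fin N) → ℝ,
      ∀ n, IsPicardState R F₁ F₂ d₁ e₁ d₂ e₂ (u n) (v n) ∧
        IsPicardSystemStep R F₁ F₂ L₁ L₂ (u n) (v n) (u (n + 1)) (v (n + 1)) := by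
  obtain ⟨s, hs⟩ := exists_seq_of_forall_exists
    (p := fun w ↦ IsPicardState R F₁ F₂ d₁ e₁ d₂ e₂ w.1 w.2)
    (r := fun w w' ↦ IsPicardSystemStep R F₁ F₂ L₁ L₂ w.1 w.2 w'.1 w'.2) (a := (e₁, e₂))
    (isPicardState_upper hb₁ hb₂ h₁ h₂) fun w hw ↦
      let ⟨u', v', h⟩ := hw.exists_step hN hR hb₁ hb₂ h₁ h₂
      ⟨(u', v'), h⟩
  exact ⟨fun n ↦ (s n).1, fun n ↦ (s n).2, hs⟩

lemma IsBetween.exists_tendsto {u : ℕ → EuclideanSpace ℝ (Fin N) → ℝ}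
    (hu : ∀ n, IsBetween R d e (u n)) (hle : ∀ n, ∀ x ∈ closedBall 0 R, u (n + 1) x ≤ u n x) :
    ∃ u', IsBetween R d e u' ∧
      ∀ x ∈ closedBall 0 R, Tendsto (fun n ↦ u n x) atTop (𝓝 (u' x)) := by
  have hlim : ∀ x ∈ closedBall 0 R, Tendsto (fun n ↦ u n x) atTop (𝓝 (⨅ n, u n x)) :=
    fun x hx ↦ tendsto_atTop_ciInf (antitone_nat_of_succ_le fun n ↦ hle n x hx)
      ⟨d x, forall_mem_range.2 fun n ↦ (hu n x hx).1⟩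
  exact ⟨_, .of_tendsto hu hlim, hlim⟩

end PicardSequence

section PicardLimit

variable {N : ℕ} {R : ℝ} {L : NNReal} {F : EuclideanSpace ℝ (Fin N) → ℝ → ℝ → ℝ}
  {d e d' e' u v : EuclideanSpace ℝ (Fin N) → ℝ}

/-- `u` is a classical solution of `Δu = F(x, u, v)` in the ball of radius `R`, continuous up to
the boundary. -/
structure IsClassicalSolution (R : ℝ) (F : EuclideanSpace ℝ (Fin N) → ℝ → ℝ → ℝ)
    (u v : EuclideanSpace ℝ (Fin N) → ℝ) : Prop where
  contDiffOn : ContDiffOn ℝ 2 u (ball 0 R)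
  continuousOn : ContinuousOn u (closedBall 0 R)
  laplacian_eq : ∀ x ∈ ball 0 R, laplacian u x = F x (u x) (v x)

lemma locallyLipschitzOn_comp {X Y Z : Type*} [PseudoEMetricSpace X] [PseudoEMetricSpace Y]
    [PseudoEMetricSpace Z] {g : Y → Z} {f : X → Y} {s : Set X} {t : Set Y}
    (hg : LocallyLipschitzOn t g) (hf : LocallyLipschitzOn s f) (hst : MapsTo f s t) :
    LocallyLipschitzOn s (g ∘ f) := by
  intro x hx
  obtain ⟨Kf, U, hU, hfU⟩ := hf hx
  obtain ⟨Kg, V, hV, hgV⟩ := hg (hst hx)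
  have hpre : f ⁻¹' V ∈ 𝓝[s] x := (hf.continuousOn x hx).tendsto_nhdsWithin hst hV
  exact ⟨Kg * Kf, U ∩ f ⁻¹' V, inter_mem hU hpre,
    hgV.comp (hfU.mono inter_subset_left) fun _ hy ↦ hy.2⟩

lemma IsBarrierPair.exists_abs_le (h : IsBarrierPair R d e) :
    ∃ B, ∀ x ∈ closedBall 0 R, ∀ s ∈ Icc (d x) (e x), |s| ≤ B := by
  obtain ⟨a, b, hab⟩ := exists_Icc_subset_of_continuous h.contDiff_lower.continuous
    h.contDiff_upper.continuous R
  exact ⟨max |a| |b|, fun x hx s hs ↦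
    abs_le_max_abs_abs (hab x hx hs).1 (hab x hx hs).2⟩

namespace IsPicardAdmissible

lemma exists_abs_source_le (h : IsPicardAdmissible R F d e d' e' L) (hb : IsBarrierPair R d e)
    (hb' : IsBarrierPair R d' e') :
    ∃ B, ∀ x ∈ closedBall 0 R, ∀ s ∈ Icc (d x) (e x), ∀ s' ∈ Icc (d x) (e x),
      ∀ t ∈ Icc (d' x) (e' x), |F x s t + L * (s' - s)| ≤ B := by
  obtain ⟨B, hB⟩ := hb.exists_abs_le
  obtain ⟨C, hC⟩ := (isCompact_barrierRegion hb hb').exists_bound_of_continuousOn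
    h.lipschitzOnWith.continuousOn
  refine ⟨C + L * (B + B), fun x hx s hs s' hs' t ht ↦ (abs_add_le _ _).trans ?_⟩
  rw [abs_mul, abs_of_nonneg L.coe_nonneg]
  gcongr
  · exact hC (x, s, t) ⟨hx, hs, ht⟩
  · exact (abs_sub _ _).trans (add_le_add (hB x hx s' hs') (hB x hx s hs))

lemma tendsto_source (h : IsPicardAdmissible R F d e d' e' L)
    {x : EuclideanSpace ℝ (Fin N)} (hx : x ∈ closedBall 0 R) {s t : ℕ → ℝ} {s' t' : ℝ}
    (hs : ∀ n, s n ∈ Icc (d x) (e x)) (ht : ∀ n, t n ∈ Icc (d' x) (e' x))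
    (hs' : Tendsto s atTop (𝓝 s')) (ht' : Tendsto t atTop (𝓝 t')) :
    Tendsto (fun n ↦ F x (s n) (t n) + L * (s (n + 1) - s n)) atTop (𝓝 (F x s' t')) := by
  have hmem : (x, s', t') ∈ barrierRegion R d e d' e' :=
    ⟨hx, isClosed_Icc.mem_of_tendsto hs' (.of_forall hs),
      isClosed_Icc.mem_of_tendsto ht' (.of_forall ht)⟩
  have hF := (h.lipschitzOnWith.continuousOn _ hmem).tendsto.comp
    (tendsto_nhdsWithin_iff.2 ⟨tendsto_const_nhds.prodMk_nhds (hs'.prodMk_nhds ht'),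
      .of_forall fun n ↦ ⟨hx, hs n, ht n⟩⟩)
  simpa using hF.add ((((tendsto_add_atTop_iff_nat 1).2 hs').sub hs').const_mul (L : ℝ))

theorem isMildSolution_of_tendsto (h : IsPicardAdmissible R F d e d' e' L)
    (hb : IsBarrierPair R d e) (hb' : IsBarrierPair R d' e')
    {u v : ℕ → EuclideanSpace ℝ (Fin N) → ℝ} {u' v' : EuclideanSpace ℝ (Fin N) → ℝ}
    (hu : ∀ n, IsBetween R d e (u n)) (hv : ∀ n, IsBetween R d' e' (v n))
    (hu_cont : ∀ n, ContinuousOn (u n) (closedBall 0 R))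
    (hv_cont : ∀ n, ContinuousOn (v n) (closedBall 0 R))
    (hstep : ∀ n, IsPicardStep R F L (u n) (v n) (u (n + 1)))
    (hulim : ∀ x ∈ closedBall 0 R, Tendsto (fun n ↦ u n x) atTop (𝓝 (u' x)))
    (hvlim : ∀ x ∈ closedBall 0 R, Tendsto (fun n ↦ v n x) atTop (𝓝 (v' x))) :
    IsMildSolution u' (fun x ↦ F x (u' x) (v' x)) (closedBall 0 R) := by
  obtain ⟨B, hB⟩ := hb.exists_abs_le
  obtain ⟨C, hC⟩ := h.exists_abs_source_le hb hb'
  have hmild (n : ℕ) : IsMildSolution (u (n + 1))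
      (fun x ↦ F x (u n x) (v n x) + L * (u (n + 1) x - u n x)) (closedBall 0 R) :=
    .of_hasApproxLaplacianOn (hstep n).1 (isCompact_closedBall 0 R)
      ((h.continuousOn_comp (hu n) (hv n) (hu_cont n) (hv_cont n)).add
        (((hu_cont (n + 1)).sub (hu_cont n)).const_smul (L : ℝ)))
  exact .of_tendsto hmild (fun n x hx ↦ hB x hx _ (hu (n + 1) x hx))
    (fun n x hx ↦ hC x hx _ (hu n x hx) _ (hu (n + 1) x hx) _ (hv n x hx))
    (fun x hx ↦ (tendsto_add_atTop_iff_nat 1).2 (hulim x hx))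
    (fun x hx ↦ h.tendsto_source hx (fun n ↦ hu n x hx) (fun n ↦ hv n x hx)
      (hulim x hx) (hvlim x hx))

lemma locallyLipschitzOn_source (h : IsPicardAdmissible R F d e d' e' L) (hu : IsBetween R d e u)
    (hv : IsBetween R d' e' v) (hu₁ : ContDiffOn ℝ 1 u (ball 0 R))
    (hv₁ : ContDiffOn ℝ 1 v (ball 0 R)) :
    LocallyLipschitzOn (ball 0 R) (fun x ↦ F x (u x) (v x)) :=
  locallyLipschitzOn_comp (fun _ _ ↦ ⟨L, _, self_mem_nhdsWithin, h.lipschitzOnWith⟩)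
    ((contDiffOn_id.prodMk (hu₁.prodMk hv₁)).locallyLipschitzOn (convex_ball 0 R))
    fun x hx ↦ have hxK := ball_subset_closedBall hx
      ⟨hxK, hu x hxK, hv x hxK⟩

lemma isClassicalSolution (h : IsPicardAdmissible R F d e d' e' L) (hb : IsBarrierPair R d e)
    (hu : IsBetween R d e u) (hv : IsBetween R d' e' v) {g : EuclideanSpace ℝ (Fin N) → ℝ}
    (hu_mild : IsMildSolution u (fun x ↦ F x (u x) (v x)) (closedBall 0 R))
    (hv_mild : IsMildSolution v g (closedBall 0 R)) : IsClassicalSolution R F u v := by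
  have hnhds : ∀ x ∈ ball (0 : EuclideanSpace ℝ (Fin N)) R, closedBall 0 R ∈ 𝓝 x :=
    fun x hx ↦ mem_of_superset (isOpen_ball.mem_nhds hx) ball_subset_closedBall
  obtain ⟨hu₂, hlap⟩ := hu_mild.contDiffOn_two_and_laplacian_eq isOpen_ball ball_subset_closedBall
    (h.locallyLipschitzOn_source hu hv
      (fun x hx ↦ (hu_mild.contDiffAt_one (hnhds x hx)).contDiffWithinAt)
      (fun x hx ↦ (hv_mild.contDiffAt_one (hnhds x hx)).contDiffWithinAt))
  exact ⟨hu₂, hu.continuousOn_closedBall hb hu₂.continuousOn, hlap⟩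

end IsPicardAdmissible

theorem exists_isClassicalSolution_between_barriers {L₁ L₂ : NNReal}
    {F₁ F₂ : EuclideanSpace ℝ (Fin N) → ℝ → ℝ → ℝ}
    {d₁ e₁ d₂ e₂ : EuclideanSpace ℝ (Fin N) → ℝ} (hN : 0 < N) (hR : 0 < R)
    (hb₁ : IsBarrierPair R d₁ e₁) (hb₂ : IsBarrierPair R d₂ e₂)
    (h₁ : IsPicardAdmissible R F₁ d₁ e₁ d₂ e₂ L₁) (h₂ : IsPicardAdmissible R F₂ d₂ e₂ d₁ e₁ L₂) :
    ∃ u v, IsClassicalSolution R F₁ u v ∧ IsClassicalSolution R F₂ v u ∧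
      IsBetween R d₁ e₁ u ∧ IsBetween R d₂ e₂ v := by
  obtain ⟨u, v, huv⟩ := exists_picard_sequence hN hR hb₁ hb₂ h₁ h₂
  choose hstate hstep using huv
  have hu n := (hstate n).isBetween_fst
  have hv n := (hstate n).isBetween_snd
  have hu_cont n := (hstate n).isSuperSolution_fst.continuousOn
  have hv_cont n := (hstate n).isSuperSolution_snd.continuousOn
  obtain ⟨u', hu', hulim⟩ := IsBetween.exists_tendsto hu fun n ↦ (hstep n).le_fst
  obtain ⟨v', hv', hvlim⟩ := IsBetween.exists_tendsto hv fun n ↦ (hstep n).le_snd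
  have hu_mild := h₁.isMildSolution_of_tendsto hb₁ hb₂ hu hv hu_cont hv_cont
    (fun n ↦ (hstep n).isPicardStep_fst) hulim hvlim
  have hv_mild := h₂.isMildSolution_of_tendsto hb₂ hb₁ hv hu hv_cont hu_cont
    (fun n ↦ (hstep n).isPicardStep_snd) hvlim hulim
  exact ⟨u', v', h₁.isClassicalSolution hb₁ hu' hv' hu_mild hv_mild,
    h₂.isClassicalSolution hb₂ hv' hu' hv_mild hu_mild, hu', hv'⟩

end PicardLimit

/-! ### The logarithmic nonlinearity and its exponential barriers -/

section LogNonlinearity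

variable {N : ℕ} {R a c Q K K' : ℝ} {q : EuclideanSpace ℝ (Fin N) → ℝ}

/-- The right-hand side `u (q + a ln u - c ln v)` of each equation of the transformed system. -/
noncomputable def logNonlinearity (q : EuclideanSpace ℝ (Fin N) → ℝ) (a c : ℝ)
    (x : EuclideanSpace ℝ (Fin N)) (s t : ℝ) : ℝ :=
  s * (q x + a * Real.log s - c * Real.log t)

/-- The sub-solution `exp (K (R² - ‖x‖²))`. -/
noncomputable def expBarrier (K R : ℝ) (x : EuclideanSpace ℝ (Fin N)) : ℝ :=
  Real.exp (K * (R ^ 2 - ‖x‖ ^ 2))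

lemma expBarrier_pos (K R : ℝ) (x : EuclideanSpace ℝ (Fin N)) : 0 < expBarrier K R x :=
  Real.exp_pos _

lemma log_expBarrier (K R : ℝ) (x : EuclideanSpace ℝ (Fin N)) :
    Real.log (expBarrier K R x) = K * (R ^ 2 - ‖x‖ ^ 2) :=
  Real.log_exp _

lemma laplacian_expBarrier (K R : ℝ) (x : EuclideanSpace ℝ (Fin N)) :
    laplacian (expBarrier K R) x = expBarrier K R x * (4 * K ^ 2 * ‖x‖ ^ 2 - 2 * K * N) := by
  have hexp (t : ℝ) : HasDerivAt (fun t ↦ Real.exp (K * (R ^ 2 - t)))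
      (-K * Real.exp (K * (R ^ 2 - t))) t := by
    convert (((hasDerivAt_id' t).const_sub (R ^ 2)).const_mul K).exp using 1
    ring
  have hlap := laplacian_comp_norm_sq hexp x ((hexp _).const_mul (-K))
  refine Eq.trans hlap ?_
  rw [expBarrier]
  ring

lemma isBarrierPair_expBarrier (hK : K ≤ 0) :
    IsBarrierPair R (expBarrier K R : EuclideanSpace ℝ (Fin N) → ℝ) fun _ ↦ 1 where
  contDiff_lower := (contDiff_const.mul (contDiff_const.sub (contDiff_norm_sq ℝ))).exp
  contDiff_upper := contDiff_const
  le x hx := by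
    have hnorm : ‖x‖ ^ 2 ≤ R ^ 2 :=
      pow_le_pow_left₀ (norm_nonneg x) (mem_closedBall_zero_iff.1 hx) 2
    exact Real.exp_le_one_iff.2 (mul_nonpos_of_nonpos_of_nonneg hK (sub_nonneg.2 hnorm))
  eq_on_sphere x hx := by simp [expBarrier, mem_sphere_zero_iff_norm.1 hx]

lemma logNonlinearity_expBarrier_le (x : EuclideanSpace ℝ (Fin N)) (hq : q x ≤ Q * ‖x‖ ^ 2)
    (hcoeff : 0 ≤ 4 * K ^ 2 + a * K - Q - c * K')
    (hradius : 0 ≤ -(a * R ^ 2) * K - 2 * K * N + c * R ^ 2 * K') :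
    logNonlinearity q a c x (expBarrier K R x) (expBarrier K' R x) ≤
      laplacian (expBarrier K R) x := by
  rw [laplacian_expBarrier, logNonlinearity, log_expBarrier, log_expBarrier]
  refine mul_le_mul_of_nonneg_left ?_ (expBarrier_pos K R x).le
  linarith [mul_nonneg hcoeff (sq_nonneg ‖x‖)]

lemma antitoneOn_logNonlinearity (hc : 0 ≤ c) (x : EuclideanSpace ℝ (Fin N)) {s : ℝ}
    (hs : 0 ≤ s) : AntitoneOn (logNonlinearity q a c x s) (Ioi 0) := by
  intro t ht t' _ htt'
  have hlog := Real.log_le_log ht htt'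
  unfold logNonlinearity
  gcongr

lemma locallyLipschitzOn_prodMk {X Y Z : Type*} [PseudoEMetricSpace X] [PseudoEMetricSpace Y]
    [PseudoEMetricSpace Z] {f : X → Y} {g : X → Z} {s : Set X} (hf : LocallyLipschitzOn s f)
    (hg : LocallyLipschitzOn s g) : LocallyLipschitzOn s fun x ↦ (f x, g x) :=
  locallyLipschitzOn_iff_restrict.2 (hf.restrict.prodMk hg.restrict)

lemma locallyLipschitzOn_logNonlinearity {s : Set (EuclideanSpace ℝ (Fin N))}
    (hq : LocallyLipschitzOn s q) :
    LocallyLipschitzOn (s ×ˢ (Ioi (0 : ℝ) ×ˢ Ioi (0 : ℝ)))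
      fun p ↦ logNonlinearity q a c p.1 p.2.1 p.2.2 := by
  have hsmooth : ContDiffOn ℝ 1
      (fun z : ℝ × ℝ × ℝ ↦ z.2.1 * (z.1 + a * Real.log z.2.1 - c * Real.log z.2.2))
      (univ ×ˢ (Ioi (0 : ℝ) ×ˢ Ioi (0 : ℝ))) := by
    have hlog_fst : ∀ z ∈ (univ : Set ℝ) ×ˢ (Ioi (0 : ℝ) ×ˢ Ioi (0 : ℝ)), z.2.1 ≠ 0 :=
      fun _ hz ↦ hz.2.1.ne'
    have hlog_snd : ∀ z ∈ (univ : Set ℝ) ×ˢ (Ioi (0 : ℝ) ×ˢ Ioi (0 : ℝ)), z.2.2 ≠ 0 :=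
      fun _ hz ↦ hz.2.2.ne'
    fun_prop (disch := assumption)
  have hconvex : Convex ℝ ((univ : Set ℝ) ×ˢ (Ioi (0 : ℝ) ×ˢ Ioi (0 : ℝ))) :=
    convex_univ.prod ((convex_Ioi 0).prod (convex_Ioi 0))
  have hq_fst : LocallyLipschitzOn (s ×ˢ (Ioi (0 : ℝ) ×ˢ Ioi (0 : ℝ)))
      (q ∘ Prod.fst) :=
    locallyLipschitzOn_comp hq LipschitzWith.prod_fst.locallyLipschitz.locallyLipschitzOn
      fun _ hp ↦ hp.1
  exact locallyLipschitzOn_comp (hsmooth.locallyLipschitzOn hconvex)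
    (locallyLipschitzOn_prodMk hq_fst
      LipschitzWith.prod_snd.locallyLipschitz.locallyLipschitzOn) fun _ hp ↦ ⟨mem_univ _, hp.2⟩

lemma exists_isPicardAdmissible_logNonlinearity
    (hq : LocallyLipschitzOn (closedBall 0 R) q) (hq_nonneg : ∀ x ∈ closedBall 0 R, 0 ≤ q x)
    (hq_le : ∀ x ∈ closedBall 0 R, q x ≤ Q * ‖x‖ ^ 2) (hc : 0 ≤ c) (hK : K ≤ 0) (hK' : K' ≤ 0)
    (hcoeff : 0 ≤ 4 * K ^ 2 + a * K - Q - c * K')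
    (hradius : 0 ≤ -(a * R ^ 2) * K - 2 * K * N + c * R ^ 2 * K') :
    ∃ L, IsPicardAdmissible R (logNonlinearity q a c) (expBarrier K R) (fun _ ↦ 1)
      (expBarrier K' R) (fun _ ↦ 1) L := by
  obtain ⟨L, hL⟩ := ((locallyLipschitzOn_logNonlinearity (a := a) (c := c) hq).mono
    fun p hp ↦ ⟨hp.1, (expBarrier_pos K R _).trans_le hp.2.1.1,
      (expBarrier_pos K' R _).trans_le hp.2.2.1⟩).exists_lipschitzOnWith_of_compact
    (isCompact_barrierRegion (isBarrierPair_expBarrier hK) (isBarrierPair_expBarrier hK'))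
  exact ⟨L, {
    lipschitzOnWith := hL
    antitoneOn := fun x _ s hs ↦ (antitoneOn_logNonlinearity hc x
      ((expBarrier_pos K R x).trans_le hs.1).le).mono fun t ht ↦
        (expBarrier_pos K' R x).trans_le ht.1
    le_laplacian_lower := fun x hx ↦
      logNonlinearity_expBarrier_le x (hq_le x (ball_subset_closedBall hx)) hcoeff hradius
    laplacian_upper_le := fun x hx ↦ by
      simpa [logNonlinearity] using hq_nonneg x (ball_subset_closedBall hx) }⟩

end LogNonlinearity

lemma exists_isPicardAdmissible_systemNonlinearity {N : ℕ} {R a α σ M K K' : ℝ}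
    {f : EuclideanSpace ℝ (Fin N) → ℝ} (hσ : σ ≠ 0) (τ : ℝ)
    (hf : LocallyLipschitzOn (closedBall 0 R) f)
    (hfb : ∀ x ∈ closedBall 0 R, 0 ≤ f x ∧ f x ≤ M * ‖x‖ ^ 2) (ha : 0 ≤ a) (hK : K ≤ 0)
    (hK' : K' ≤ 0)
    (hcoeff : 0 ≤ 4 * K ^ 2 + (2 * (a + α) * σ ^ 2 / σ ^ 4) * K - M / σ ^ 4
      - (2 * a * τ ^ 2 / σ ^ 4) * K')
    (hineq : 0 ≤ -(2 * (a + α) * R ^ 2 / σ ^ 2) * K - 2 * K * N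
      + (2 * a * τ ^ 2 * R ^ 2 / σ ^ 4) * K') :
    ∃ L, IsPicardAdmissible R
      (logNonlinearity (fun x ↦ f x / σ ^ 4) (2 * (a + α) / σ ^ 2) (2 * a * τ ^ 2 / σ ^ 4))
      (expBarrier K R) (fun _ ↦ 1) (expBarrier K' R) (fun _ ↦ 1) L := by
  have hσ₄ : 0 ≤ σ ^ 4 := by positivity
  have hcancel : 2 * (a + α) * σ ^ 2 / σ ^ 4 = 2 * (a + α) / σ ^ 2 := by field_simp
  have hq : LocallyLipschitzOn (closedBall 0 R) fun x ↦ f x / σ ^ 4 :=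
    have hdiv : ContDiff ℝ 1 fun y : ℝ ↦ y / σ ^ 4 := contDiff_id.div_const _
    locallyLipschitzOn_comp hdiv.locallyLipschitz.locallyLipschitzOn hf (mapsTo_univ _ _)
  refine exists_isPicardAdmissible_logNonlinearity (Q := M / σ ^ 4) hq
    (fun x hx ↦ div_nonneg (hfb x hx).1 hσ₄) (fun x hx ↦ ?_) (by positivity) hK hK'
    (by rwa [hcancel] at hcoeff) (hineq.trans_eq (by ring))
  rw [div_mul_eq_mul_div]
  exact div_le_div_of_nonneg_right (hfb x hx).2 hσ₄

theorem transformed_system_exists_general (N : ℕ) (hN : 0 < N) (R : ℝ) (hR : 0 < R)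
    (a₁ α₁ a₂ α₂ σ₁ σ₂ M₁ M₂ : ℝ) (ha₁ : 0 ≤ a₁) (ha₂ : 0 ≤ a₂) (hσ₁ : σ₁ ≠ 0) (hσ₂ : σ₂ ≠ 0)
    (f₁ f₂ : EuclideanSpace ℝ (Fin N) → ℝ)
    (hf₁ : LocallyLipschitzOn (closedBall 0 R) f₁) (hf₂ : LocallyLipschitzOn (closedBall 0 R) f₂)
    (hf₁b : ∀ x ∈ closedBall 0 R, 0 ≤ f₁ x ∧ f₁ x ≤ M₁ * ‖x‖ ^ 2)
    (hf₂b : ∀ x ∈ closedBall 0 R, 0 ≤ f₂ x ∧ f₂ x ≤ M₂ * ‖x‖ ^ 2)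
    (K₁ K₂ : ℝ) (hK₁ : K₁ ≤ 0) (hK₂ : K₂ ≤ 0)
    (hcoeff₁ : 0 ≤ 4 * K₁ ^ 2 + (2 * (a₁ + α₁) * σ₁ ^ 2 / σ₁ ^ 4) * K₁
      - M₁ / σ₁ ^ 4 - (2 * a₁ * σ₂ ^ 2 / σ₁ ^ 4) * K₂)
    (hcoeff₂ : 0 ≤ 4 * K₂ ^ 2 + (2 * (a₂ + α₂) * σ₂ ^ 2 / σ₂ ^ 4) * K₂
      - M₂ / σ₂ ^ 4 - (2 * a₂ * σ₁ ^ 2 / σ₂ ^ 4) * K₁)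
    (hineq₁ : -(2 * (a₁ + α₁) * R ^ 2 / σ₁ ^ 2) * K₁ - 2 * K₁ * (N : ℝ)
      + (2 * a₁ * σ₂ ^ 2 * R ^ 2 / σ₁ ^ 4) * K₂ ≥ 0)
    (hineq₂ : -(2 * (a₂ + α₂) * R ^ 2 / σ₂ ^ 2) * K₂ - 2 * (N : ℝ) * K₂
      + (2 * a₂ * σ₁ ^ 2 * R ^ 2 / σ₂ ^ 4) * K₁ ≥ 0) :
    ∃ u₁ u₂ : EuclideanSpace ℝ (Fin N) → ℝ,
      ContDiffOn ℝ 2 u₁ (ball (0 : EuclideanSpace ℝ (Fin N)) R) ∧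
      ContDiffOn ℝ 2 u₂ (ball (0 : EuclideanSpace ℝ (Fin N)) R) ∧
      ContinuousOn u₁ (closedBall (0 : EuclideanSpace ℝ (Fin N)) R) ∧
      ContinuousOn u₂ (closedBall (0 : EuclideanSpace ℝ (Fin N)) R) ∧
      (∀ x ∈ ball (0 : EuclideanSpace ℝ (Fin N)) R,
        laplacian u₁ x = u₁ x * (f₁ x / σ₁ ^ 4 + 2 * (a₁ + α₁) / σ₁ ^ 2 * Real.log (u₁ x)
          - 2 * a₁ * σ₂ ^ 2 / σ₁ ^ 4 * Real.log (u₂ x)) ∧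
        laplacian u₂ x = u₂ x * (f₂ x / σ₂ ^ 4 + 2 * (a₂ + α₂) / σ₂ ^ 2 * Real.log (u₂ x)
          - 2 * a₂ * σ₁ ^ 2 / σ₂ ^ 4 * Real.log (u₁ x))) ∧
      (∀ x ∈ sphere (0 : EuclideanSpace ℝ (Fin N)) R, u₁ x = 1 ∧ u₂ x = 1) ∧
      (∀ x ∈ closedBall (0 : EuclideanSpace ℝ (Fin N)) R,
        Real.exp (K₁ * (R ^ 2 - ‖x‖ ^ 2)) ≤ u₁ x ∧ u₁ x ≤ 1 ∧
        Real.exp (K₂ * (R ^ 2 - ‖x‖ ^ 2)) ≤ u₂ x ∧ u₂ x ≤ 1) := by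
  obtain ⟨L₁, hadm₁⟩ := exists_isPicardAdmissible_systemNonlinearity hσ₁ σ₂ hf₁ hf₁b ha₁ hK₁ hK₂
    hcoeff₁ hineq₁
  obtain ⟨L₂, hadm₂⟩ := exists_isPicardAdmissible_systemNonlinearity hσ₂ σ₁ hf₂ hf₂b ha₂ hK₂ hK₁
    hcoeff₂ (by rwa [mul_right_comm 2 K₂])
  have hb₁ := isBarrierPair_expBarrier (N := N) (R := R) hK₁
  have hb₂ := isBarrierPair_expBarrier (N := N) (R := R) hK₂
  obtain ⟨u, v, hu, hv, hu_btw, hv_btw⟩ :=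
    exists_isClassicalSolution_between_barriers hN hR hb₁ hb₂ hadm₁ hadm₂
  exact ⟨u, v, hu.contDiffOn, hv.contDiffOn, hu.continuousOn, hv.continuousOn,
    fun x hx ↦ ⟨hu.laplacian_eq x hx, hv.laplacian_eq x hx⟩,
    fun x hx ↦ ⟨hu_btw.eq_on_sphere hb₁ x hx, hv_btw.eq_on_sphere hb₂ x hx⟩,
    fun x hx ↦ ⟨(hu_btw x hx).1, (hu_btw x hx).2, (hv_btw x hx).1, (hv_btw x hx).2⟩⟩

/-- Existence part of the main theorem for the logarithmically transformed system: a solution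
`(u₁, u₂)` with boundary value `1`, sandwiched between the sub-solution pair
`(exp(K₁(R²−‖x‖²)), exp(K₂(R²−‖x‖²)))` and the super-solution pair `(1, 1)`. -/
theorem transformed_system_exists (N : ℕ) (hN : 0 < N) (R : ℝ) (hR : 0 < R)
    (a₁ α₁ a₂ α₂ σ₁ σ₂ M₁ M₂ : ℝ)
    (ha₁ : 0 < a₁) (hα₁ : 0 < α₁) (ha₂ : 0 < a₂) (hα₂ : 0 < α₂)
    (hσ₁ : 0 < σ₁) (hσ₂ : 0 < σ₂) (hM₁ : 0 < M₁) (hM₂ : 0 < M₂)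
    (f₁ f₂ : EuclideanSpace ℝ (Fin N) → ℝ)
    (hf₁c : Continuous f₁) (hf₂c : Continuous f₂)
    (hf₁cv : ConvexOn ℝ Set.univ f₁) (hf₂cv : ConvexOn ℝ Set.univ f₂)
    (hf₁b : ∀ x, 0 ≤ f₁ x ∧ f₁ x ≤ M₁ * ‖x‖ ^ 2)
    (hf₂b : ∀ x, 0 ≤ f₂ x ∧ f₂ x ≤ M₂ * ‖x‖ ^ 2)
    (K₁ K₂ : ℝ) (hK₁ : K₁ < 0) (hK₂ : K₂ < 0)
    (heq₁ : 4 * K₁ ^ 2 + (2 * (a₁ + α₁) * σ₁ ^ 2 / σ₁ ^ 4) * K₁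
      - M₁ / σ₁ ^ 4 - (2 * a₁ * σ₂ ^ 2 / σ₁ ^ 4) * K₂ = 0)
    (heq₂ : 4 * K₂ ^ 2 + (2 * (a₂ + α₂) * σ₂ ^ 2 / σ₂ ^ 4) * K₂
      - M₂ / σ₂ ^ 4 - (2 * a₂ * σ₁ ^ 2 / σ₂ ^ 4) * K₁ = 0)
    (hineq₁ : -(2 * (a₁ + α₁) * R ^ 2 / σ₁ ^ 2) * K₁ - 2 * K₁ * (N : ℝ)
      + (2 * a₁ * σ₂ ^ 2 * R ^ 2 / σ₁ ^ 4) * K₂ ≥ 0)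
    (hineq₂ : -(2 * (a₂ + α₂) * R ^ 2 / σ₂ ^ 2) * K₂ - 2 * (N : ℝ) * K₂
      + (2 * a₂ * σ₁ ^ 2 * R ^ 2 / σ₂ ^ 4) * K₁ ≥ 0) :
    ∃ u₁ u₂ : EuclideanSpace ℝ (Fin N) → ℝ,
      ContDiffOn ℝ 2 u₁ (ball (0 : EuclideanSpace ℝ (Fin N)) R) ∧
      ContDiffOn ℝ 2 u₂ (ball (0 : EuclideanSpace ℝ (Fin N)) R) ∧
      ContinuousOn u₁ (closedBall (0 : EuclideanSpace ℝ (Fin N)) R) ∧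
      ContinuousOn u₂ (closedBall (0 : EuclideanSpace ℝ (Fin N)) R) ∧
      (∀ x ∈ ball (0 : EuclideanSpace ℝ (Fin N)) R,
        laplacian u₁ x = u₁ x * (f₁ x / σ₁ ^ 4 + 2 * (a₁ + α₁) / σ₁ ^ 2 * Real.log (u₁ x)
          - 2 * a₁ * σ₂ ^ 2 / σ₁ ^ 4 * Real.log (u₂ x)) ∧
        laplacian u₂ x = u₂ x * (f₂ x / σ₂ ^ 4 + 2 * (a₂ + α₂) / σ₂ ^ 2 * Real.log (u₂ x)
          - 2 * a₂ * σ₁ ^ 2 / σ₂ ^ 4 * Real.log (u₁ x))) ∧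
      (∀ x ∈ sphere (0 : EuclideanSpace ℝ (Fin N)) R, u₁ x = 1 ∧ u₂ x = 1) ∧
      (∀ x ∈ closedBall (0 : EuclideanSpace ℝ (Fin N)) R,
        Real.exp (K₁ * (R ^ 2 - ‖x‖ ^ 2)) ≤ u₁ x ∧ u₁ x ≤ 1 ∧
        Real.exp (K₂ * (R ^ 2 - ‖x‖ ^ 2)) ≤ u₂ x ∧ u₂ x ≤ 1) :=
  transformed_system_exists_general N hN R hR a₁ α₁ a₂ α₂ σ₁ σ₂ M₁ M₂ ha₁.le ha₂.le hσ₁.ne'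
    hσ₂.ne' f₁ f₂ hf₁cv.locallyLipschitz.locallyLipschitzOn
    hf₂cv.locallyLipschitz.locallyLipschitzOn (fun x _ ↦ hf₁b x) (fun x _ ↦ hf₂b x) K₁ K₂ hK₁.le
    hK₂.le heq₁.ge heq₂.ge hineq₁ hineq₂
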